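/- arXiv:1703.06061 — 2 statements merged into one kernel-verified Lean document; each statement's English description precedes it below -/
import Mathlib

section
/- For every word w of length n over an alphabet of size k ≥ 2, the size g(w) of a smallest SLP for w is in O(n/log_k n), and there exist words of length n over a k-letter alphabet with g(w) ∈ Ω(n/log_k n). -/
/-!
Upper bound: cut a word of length `n` into blocks of length `l ≈ log_k n / 3`. An SLP of depth two
with one nonterminal for each of the `k ^ l` words of length `l` derives it; the dictionary costs
only `l * k ^ l` symbols, and the start rule has about `n / l` symbols.

Lower bound: an SLP of size `s` is determined by the concatenation of its right-hand sides, their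
lengths, and its start symbol, so over `k` letters there are at most `s * (2 * (s + k)) ^ s` of
them. As the `k ^ n` words of length `n` require distinct SLPs, some word of length `n ≥ k` has
`k ^ n ≤ n ^ O(g(w))`.
-/

/-- A straight-line program over alphabet `α`: nonterminals `0, ..., n-1`, each with a
single nonempty right-hand side referring only to smaller nonterminals (acyclicity). -/
structure SLP (α : Type) where
  n : ℕ
  rhs : Fin n → List (Fin n ⊕ α)
  start : Fin n
  dec : ∀ i j, Sum.inl j ∈ rhs i → (j : ℕ) < (i : ℕ)
  ne : ∀ i, rhs i ≠ []

/-- The word derived by nonterminal `i`. -/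
def SLP.val {α : Type} (G : SLP α) (i : Fin G.n) : List α :=
  ((G.rhs i).attach.map (fun s =>
    match h : s.1 with
    | Sum.inl j => G.val j
    | Sum.inr a => [a])).flatten
termination_by (i : ℕ)
decreasing_by exact G.dec i _ (h ▸ s.2)

/-- The size of an SLP: total length of all right-hand sides. -/
def SLP.size {α : Type} (G : SLP α) : ℕ := ∑ i, (G.rhs i).length

def SLP.produces {α : Type} (G : SLP α) (w : List α) : Prop := G.val G.start = w

/-- `gsize w` is the size of a smallest SLP producing `w`. -/
noncomputable def gsize {α : Type} (w : List α) : ℕ :=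
  sInf {s | ∃ G : SLP α, G.produces w ∧ G.size = s}

namespace SLP

variable {ι κ α : Type} {m : ℕ}

/-- The word obtained from the sentential form `u`, a string of nonterminals in `ι` and letters in
`α`, by replacing each nonterminal `i` with the word `d i`. -/
def expand (d : ι → List α) (u : List (ι ⊕ α)) : List α :=
  u.flatMap (Sum.elim d fun a => [a])

theorem expand_map_inr (d : ι → List α) (w : List α) : expand d (w.map Sum.inr) = w := by
  simp [expand, List.flatMap_map]

theorem expand_map_sumMap (d : κ → List α) (f : ι → κ) (u : List (ι ⊕ α)) :
    expand d (u.map (Sum.map f id)) = expand (d ∘ f) u := by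
  simp only [expand, List.flatMap_map, Sum.elim_map, Function.comp_def, id_eq]

theorem val_eq_expand (G : SLP α) (i : Fin G.n) : G.val i = expand G.val (G.rhs i) := by
  rw [val, expand, List.flatMap_def]
  congr 1
  conv_rhs => rw [← List.attach_map_subtype_val (G.rhs i), List.map_map]
  apply List.map_congr_left
  rintro ⟨_ | _, _⟩ - <;> rfl

theorem n_le_size (G : SLP α) : G.n ≤ G.size := by
  have h : ∑ _i : Fin G.n, 1 ≤ ∑ i, (G.rhs i).length :=
    Finset.sum_le_sum fun i _ => List.length_pos_iff.2 (G.ne i)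
  simpa [size] using h

theorem size_pos (G : SLP α) : 0 < G.size :=
  G.start.pos.trans_le G.n_le_size

/-- The SLP of depth two with a nonterminal for each word of the dictionary `d`, and a last
nonterminal, the start symbol, whose right-hand side is `u`. -/
def ofDictionary (d : Fin m → List α) (hd : ∀ i, d i ≠ []) (u : List (Fin m ⊕ α))
    (hu : u ≠ []) : SLP α where
  n := m + 1
  rhs := Fin.lastCases (u.map (Sum.map Fin.castSucc id)) fun i => (d i).map Sum.inr
  start := Fin.last m
  dec i j := by
    cases i using Fin.lastCases with
    | last =>
      simp only [Fin.lastCases_last, List.mem_map]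
      rintro ⟨x | x, -, h⟩
      · simp only [Sum.map_inl, Sum.inl.injEq] at h
        simp [← h]
      · simp at h
    | cast i => simp
  ne i := by
    cases i using Fin.lastCases with
    | last => simpa using hu
    | cast i => simpa using hd i

theorem ofDictionary_produces (d : Fin m → List α) (hd : ∀ i, d i ≠ []) (u : List (Fin m ⊕ α))
    (hu : u ≠ []) : (ofDictionary d hd u hu).produces (expand d u) := by
  have hrhs : (ofDictionary d hd u hu).rhs (ofDictionary d hd u hu).start =
      u.map (Sum.map Fin.castSucc id) := by
    simp [ofDictionary]
  have hval : (ofDictionary d hd u hu).val ∘ (Fin.castSucc : Fin m → Fin (m + 1)) = d := by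
    funext i
    refine (val_eq_expand _ _).trans ?_
    simp [ofDictionary, expand_map_inr]
  rw [produces, val_eq_expand, hrhs]
  exact (expand_map_sumMap _ _ u).trans (by rw [hval])

theorem size_ofDictionary (d : Fin m → List α) (hd : ∀ i, d i ≠ []) (u : List (Fin m ⊕ α))
    (hu : u ≠ []) : (ofDictionary d hd u hu).size = ∑ i, (d i).length + u.length := by
  change ∑ i : Fin (m + 1), _ = _
  rw [Fin.sum_univ_castSucc]
  simp [ofDictionary]

theorem exists_produces {w : List α} (hw : w ≠ []) : ∃ G : SLP α, G.produces w := by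
  have h := ofDictionary_produces Fin.elim0 (fun i => i.elim0) (w.map Sum.inr) (by simpa using hw)
  rw [expand_map_inr] at h
  exact ⟨_, h⟩

variable {s : ℕ}

/-- The right-hand sides of `G`, listed in order, with `Fin G.n` embedded into `Fin s` so that they
are strings over an alphabet that does not depend on `G`. -/
def rules (G : SLP α) (h : G.n ≤ s) : List (List (Fin s ⊕ α)) :=
  List.ofFn fun i => (G.rhs i).map (Sum.map (Fin.castLE h) id)

theorem map_length_rules (G : SLP α) (h : G.n ≤ s) :
    (G.rules h).map List.length = List.ofFn fun i => (G.rhs i).length := by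
  simp [rules, List.map_ofFn, Function.comp_def]

theorem sum_map_length_rules (G : SLP α) (h : G.n ≤ s) :
    ((G.rules h).map List.length).sum = G.size := by
  rw [map_length_rules, List.sum_ofFn, size]

theorem eq_of_rules_eq {G G' : SLP α} (h : G.n ≤ s) (h' : G'.n ≤ s)
    (hrules : G.rules h = G'.rules h') (hstart : (G.start : ℕ) = G'.start) : G = G' := by
  obtain ⟨n, rhs, start, _, _⟩ := G
  obtain ⟨n', rhs', start', _, _⟩ := G'
  obtain rfl : n = n' := by simpa [rules] using congrArg List.length hrules
  obtain rfl : start = start' := Fin.ext hstart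
  have hinj : Function.Injective (Sum.map (Fin.castLE h) (id : α → α)) :=
    Sum.map_injective.2 ⟨Fin.castLE_injective h, Function.injective_id⟩
  obtain rfl : rhs = rhs' := by
    funext i
    exact List.map_injective_iff.2 hinj (congrFun (List.ofFn_injective hrules) i)
  rfl

/-- Codes for SLPs of size `s`: the lengths of the right-hand sides, their concatenation, and the
start symbol. Since an SLP has at most `s` nonterminals, they are numbered by `Fin s`. -/
abbrev Code (α : Type) (s : ℕ) : Type :=
  Composition s × List.Vector (Fin s ⊕ α) s × Fin s

/-- The code of an SLP of size `s`, used to bound the number of such SLPs. -/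
def encode (G : {G : SLP α // G.size = s}) : Code α s :=
  have h : G.1.n ≤ s := G.1.n_le_size.trans_eq G.2
  (⟨(G.1.rules h).map List.length,
      fun {i} hi => by
        rw [map_length_rules, List.mem_ofFn] at hi
        obtain ⟨j, rfl⟩ := hi
        exact List.length_pos_iff.2 (G.1.ne j),
      (sum_map_length_rules _ h).trans G.2⟩,
    ⟨(G.1.rules h).flatten, by rw [List.length_flatten, sum_map_length_rules, G.2]⟩,
    Fin.castLE h G.1.start)

theorem encode_injective :
    Function.Injective (encode : {G : SLP α // G.size = s} → Code α s) := by
  intro G G' h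
  have hlengths := congrArg (fun c : Code α s => c.1.blocks) h
  have hflatten := congrArg (fun c : Code α s => c.2.1.toList) h
  have hstart := congrArg (fun c : Code α s => (c.2.2 : ℕ)) h
  exact Subtype.ext
    (eq_of_rules_eq _ _ (List.eq_iff_flatten_eq.2 ⟨hflatten, hlengths⟩) hstart)

theorem finite_setOf_size_eq [Finite α] (s : ℕ) : {G : SLP α | G.size = s}.Finite :=
  Finite.of_injective encode encode_injective

theorem setOf_size_le_eq_biUnion (S : ℕ) :
    {G : SLP α | G.size ≤ S} = ⋃ s ∈ Finset.range (S + 1), {G : SLP α | G.size = s} := by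
  ext G
  simp

theorem finite_setOf_size_le [Finite α] (S : ℕ) : {G : SLP α | G.size ≤ S}.Finite := by
  rw [setOf_size_le_eq_biUnion]
  exact (Finset.range (S + 1)).finite_toSet.biUnion fun s _ => finite_setOf_size_eq s

section Fintype

variable [Fintype α]

theorem card_code_le (s : ℕ) :
    Fintype.card (Code α s) ≤ s * (2 * (s + Fintype.card α)) ^ s := by
  calc Fintype.card (Code α s)
      = 2 ^ (s - 1) * ((s + Fintype.card α) ^ s * s) := by
        simp [composition_card, card_vector]
    _ ≤ 2 ^ s * ((s + Fintype.card α) ^ s * s) := by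
        gcongr <;> omega
    _ = s * (2 * (s + Fintype.card α)) ^ s := by
        rw [mul_pow]
        ring

theorem ncard_setOf_size_eq_le (s : ℕ) :
    {G : SLP α | G.size = s}.ncard ≤ s * (2 * (s + Fintype.card α)) ^ s :=
  calc {G : SLP α | G.size = s}.ncard ≤ Nat.card (Code α s) :=
        Nat.card_le_card_of_injective encode encode_injective
    _ ≤ s * (2 * (s + Fintype.card α)) ^ s := Nat.card_eq_fintype_card.trans_le (card_code_le s)

theorem ncard_setOf_size_le_le (S : ℕ) :
    {G : SLP α | G.size ≤ S}.ncard ≤ (S + 1) * (S * (2 * (S + Fintype.card α)) ^ S) := by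
  have hmono {s : ℕ} (hs : s ≤ S) :
      s * (2 * (s + Fintype.card α)) ^ s ≤ S * (2 * (S + Fintype.card α)) ^ S := by
    obtain rfl | hpos := Nat.eq_zero_or_pos s
    · simp
    · have hbase : 0 < 2 * (S + Fintype.card α) := by omega
      gcongr
  calc {G : SLP α | G.size ≤ S}.ncard
      ≤ ∑ s ∈ Finset.range (S + 1), {G : SLP α | G.size = s}.ncard := by
        rw [setOf_size_le_eq_biUnion]
        exact Finset.set_ncard_biUnion_le _ _
    _ ≤ ∑ _s ∈ Finset.range (S + 1), S * (2 * (S + Fintype.card α)) ^ S :=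
        Finset.sum_le_sum fun s hs =>
          (ncard_setOf_size_eq_le s).trans (hmono (Finset.mem_range_succ_iff.1 hs))
    _ = (S + 1) * (S * (2 * (S + Fintype.card α)) ^ S) := by simp

end Fintype

end SLP

section gsize

variable {ι α : Type}

theorem SLP.produces.gsize_le {G : SLP α} {w : List α} (h : G.produces w) : gsize w ≤ G.size :=
  Nat.sInf_le ⟨G, h, rfl⟩

theorem exists_produces_and_size_eq_gsize {w : List α} (hw : w ≠ []) :
    ∃ G : SLP α, G.produces w ∧ G.size = gsize w := by
  obtain ⟨G, hG⟩ := SLP.exists_produces hw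
  exact Nat.sInf_mem (s := {s | ∃ G : SLP α, G.produces w ∧ G.size = s}) ⟨_, G, hG, rfl⟩

theorem gsize_pos {w : List α} (hw : w ≠ []) : 0 < gsize w := by
  obtain ⟨G, -, hG⟩ := exists_produces_and_size_eq_gsize hw
  exact hG ▸ G.size_pos

theorem gsize_expand_le [Fintype ι] (d : ι → List α) (hd : ∀ i, d i ≠ []) (u : List (ι ⊕ α))
    (hu : u ≠ []) : gsize (SLP.expand d u) ≤ ∑ i, (d i).length + u.length := by
  let e := Fintype.equivFin ι
  have h := (SLP.ofDictionary_produces (d ∘ e.symm) (fun i => hd (e.symm i))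
    (u.map (Sum.map e id)) (by simpa using hu)).gsize_le
  rw [SLP.size_ofDictionary, SLP.expand_map_sumMap, Function.comp_assoc, e.symm_comp_self,
    Function.comp_id, List.length_map] at h
  exact h.trans_eq (congrArg (· + u.length) (e.symm.sum_comp fun i => (d i).length))

theorem gsize_le_length {w : List α} (hw : w ≠ []) : gsize w ≤ w.length := by
  have h := gsize_expand_le (Empty.elim : Empty → List α) (fun i => i.elim) (w.map Sum.inr)
    (by simpa using hw)
  simpa [SLP.expand_map_inr] using h

theorem exists_expand_toList_eq {l : ℕ} (hl : 0 < l) (w : List α) :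
    ∃ u : List (List.Vector α l ⊕ α), SLP.expand List.Vector.toList u = w ∧
      u.length = w.length / l + w.length % l := by
  by_cases hw : w.length < l
  · refine ⟨w.map Sum.inr, SLP.expand_map_inr _ w, ?_⟩
    rw [List.length_map, Nat.div_eq_of_lt hw, Nat.mod_eq_of_lt hw, zero_add]
  · rw [not_lt] at hw
    obtain ⟨u, hu, hlen⟩ := exists_expand_toList_eq hl (w.drop l)
    let v : List.Vector α l := ⟨w.take l, List.length_take_of_le hw⟩
    refine ⟨Sum.inl v :: u, ?_, ?_⟩
    · calc SLP.expand List.Vector.toList (Sum.inl v :: u)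
          = w.take l ++ SLP.expand List.Vector.toList u := rfl
        _ = w := by rw [hu, List.take_append_drop]
    · rw [List.length_cons, hlen, List.length_drop, ← Nat.mod_eq_sub_mod hw,
        Nat.div_eq_sub_div hl hw]
      ring
termination_by w.length
decreasing_by simp; omega

section Fintype

variable [Fintype α]

theorem gsize_le_div_add_mod_add {l : ℕ} (hl : 0 < l) {w : List α} (hw : w ≠ []) :
    gsize w ≤ w.length / l + w.length % l + l * Fintype.card α ^ l := by
  obtain ⟨u, rfl, hlen⟩ := exists_expand_toList_eq hl w
  have hu : u ≠ [] := by
    rintro rfl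
    exact hw rfl
  have hd (v : List.Vector α l) : v.toList ≠ [] :=
    List.ne_nil_of_length_pos (v.toList_length.symm ▸ hl)
  calc gsize (SLP.expand List.Vector.toList u)
      ≤ ∑ v : List.Vector α l, v.toList.length + u.length := gsize_expand_le _ hd u hu
    _ = (SLP.expand List.Vector.toList u).length / l +
          (SLP.expand List.Vector.toList u).length % l + l * Fintype.card α ^ l := by
      rw [hlen]
      simp only [List.Vector.toList_length, Finset.sum_const, Finset.card_univ, card_vector,
        smul_eq_mul]
      ring

theorem gsize_mul_log_add_one_le (hα : 2 ≤ Fintype.card α) {w : List α} (hw : w ≠ []) :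
    gsize w * (Nat.log (Fintype.card α) w.length + 1) ≤ 18 * w.length := by
  set k := Fintype.card α
  set n := w.length
  have hn : n ≠ 0 := by simpa [n] using hw
  -- Dividing by 3 leaves room for the cost of the dictionary, even against the crude `l ≤ k ^ l`.
  set l := Nat.log k n / 3
  obtain hl | hl := Nat.eq_zero_or_pos l
  · calc gsize w * (Nat.log k n + 1) ≤ n * 18 :=
          Nat.mul_le_mul (gsize_le_length hw) (by omega)
      _ = 18 * n := mul_comm _ _
  have hlk : l ≤ k ^ l := (Nat.lt_pow_self hα).le
  have hdict : l * l * k ^ l ≤ n := by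
    calc l * l * k ^ l ≤ k ^ l * k ^ l * k ^ l := by gcongr
      _ = k ^ (l * 3) := by ring
      _ ≤ k ^ Nat.log k n := Nat.pow_le_pow_right (by omega) (by omega)
      _ ≤ n := Nat.pow_log_le_self k hn
  have hrest : l * (n % l) ≤ n := by
    calc l * (n % l) ≤ l * l := by gcongr; exact (Nat.mod_lt n hl).le
      _ ≤ l * l * k ^ l := Nat.le_mul_of_pos_right _ (by positivity)
      _ ≤ n := hdict
  calc gsize w * (Nat.log k n + 1)
      ≤ (n / l + n % l + l * k ^ l) * (6 * l) :=
        Nat.mul_le_mul (gsize_le_div_add_mod_add hl hw) (by omega)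
    _ = 6 * (l * (n / l) + l * (n % l) + l * l * k ^ l) := by ring
    _ ≤ 6 * (n + n + n) := by gcongr; exact Nat.mul_div_le n l
    _ = 18 * n := by ring

theorem gsize_mul_logb_le (hα : 2 ≤ Fintype.card α) {w : List α} (hw : w ≠ []) :
    (gsize w : ℝ) * Real.logb (Fintype.card α) w.length ≤ 18 * w.length := by
  have hlog : Real.logb (Fintype.card α) w.length ≤
      (Nat.log (Fintype.card α) w.length + 1 : ℕ) := by
    rw [Real.logb_le_iff_le_rpow (by exact_mod_cast hα)
      (by exact_mod_cast List.length_pos_iff.2 hw), Real.rpow_natCast]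
    exact_mod_cast (Nat.lt_pow_succ_log_self hα w.length).le
  calc (gsize w : ℝ) * Real.logb (Fintype.card α) w.length
      ≤ gsize w * (Nat.log (Fintype.card α) w.length + 1 : ℕ) := by gcongr
    _ ≤ 18 * w.length := by exact_mod_cast gsize_mul_log_add_one_le hα hw

theorem card_pow_le_of_forall_gsize_le {n S : ℕ} (hn : n ≠ 0)
    (h : ∀ w : List α, w.length = n → gsize w ≤ S) :
    Fintype.card α ^ n ≤ (S + 1) * (S * (2 * (S + Fintype.card α)) ^ S) := by
  have hsubset : {w : List α | w.length = n} ⊆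
      (fun G : SLP α => G.val G.start) '' {G | G.size ≤ S} := by
    rintro w rfl
    obtain ⟨G, hG, hsize⟩ := exists_produces_and_size_eq_gsize (List.length_eq_zero_iff.not.1 hn)
    exact ⟨G, hsize.trans_le (h w rfl), hG⟩
  have hfinite := SLP.finite_setOf_size_le (α := α) S
  calc Fintype.card α ^ n = {w : List α | w.length = n}.ncard :=
        (card_vector n).symm.trans Nat.card_eq_fintype_card.symm
    _ ≤ ((fun G : SLP α => G.val G.start) '' {G | G.size ≤ S}).ncard :=
        Set.ncard_le_ncard hsubset (hfinite.image _)
    _ ≤ {G : SLP α | G.size ≤ S}.ncard := Set.ncard_image_le hfinite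
    _ ≤ _ := SLP.ncard_setOf_size_le_le S

theorem exists_card_pow_le_pow_gsize {n : ℕ} (hα : 2 ≤ Fintype.card α)
    (hn : Fintype.card α ≤ n) :
    ∃ w : List α, w.length = n ∧ Fintype.card α ^ n ≤ n ^ (6 * gsize w) := by
  have : Nonempty α := Fintype.card_pos_iff.1 (by omega)
  have : Nonempty (List.Vector α n) := ⟨List.Vector.replicate n (Classical.arbitrary α)⟩
  obtain ⟨⟨w, hw⟩, hmax⟩ := Finite.exists_max fun w : List.Vector α n => gsize w.1
  refine ⟨w, hw, ?_⟩
  have hw0 : w ≠ [] := List.ne_nil_of_length_pos (by omega)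
  have hpos : 1 ≤ gsize w := gsize_pos hw0
  have hle : gsize w ≤ n := hw ▸ gsize_le_length hw0
  have hn2 : 2 * n ≤ n * n := Nat.mul_le_mul_right n (hα.trans hn)
  have hbase : 2 * (gsize w + Fintype.card α) ≤ n ^ 3 := by
    calc 2 * (gsize w + Fintype.card α) ≤ 2 * (2 * n) := by omega
      _ ≤ n * (n * n) := Nat.mul_le_mul (hα.trans hn) hn2
      _ = n ^ 3 := by ring
  have hfactor : (gsize w + 1) * gsize w ≤ n ^ 3 := by
    calc (gsize w + 1) * gsize w ≤ n * n * n := Nat.mul_le_mul (by omega) hle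
      _ = n ^ 3 := by ring
  calc Fintype.card α ^ n
      ≤ (gsize w + 1) * (gsize w * (2 * (gsize w + Fintype.card α)) ^ gsize w) :=
        card_pow_le_of_forall_gsize_le (by omega) fun u hu => hmax ⟨u, hu⟩
    _ = (gsize w + 1) * gsize w * (2 * (gsize w + Fintype.card α)) ^ gsize w := by ring
    _ ≤ n ^ 3 * (n ^ 3) ^ gsize w := by gcongr
    _ = n ^ (3 + 3 * gsize w) := by ring
    _ ≤ n ^ (6 * gsize w) := Nat.pow_le_pow_right (by omega) (by omega)

theorem exists_le_gsize_mul_logb {n : ℕ} (hα : 2 ≤ Fintype.card α) (hn : Fintype.card α ≤ n) :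
    ∃ w : List α, w.length = n ∧
      (n : ℝ) ≤ 6 * gsize w * Real.logb (Fintype.card α) n := by
  obtain ⟨w, hw, hpow⟩ := exists_card_pow_le_pow_gsize hα hn
  have hcard : (1 : ℝ) < Fintype.card α := by exact_mod_cast hα
  refine ⟨w, hw, ?_⟩
  calc (n : ℝ) = Real.logb (Fintype.card α) ((Fintype.card α : ℝ) ^ n) := by
        rw [Real.logb_pow, Real.logb_self_eq_one hcard, mul_one]
    _ ≤ Real.logb (Fintype.card α) ((n : ℝ) ^ (6 * gsize w)) :=
        Real.logb_le_logb_of_le hcard (by positivity) (by exact_mod_cast hpow)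
    _ = 6 * gsize w * Real.logb (Fintype.card α) n := by
        rw [Real.logb_pow]
        push_cast
        rfl

end Fintype

end gsize

theorem repair_stmt_1_general :
    ∃ C : ℕ, 0 < C ∧ ∀ (α : Type) [Fintype α], 2 ≤ Fintype.card α →
      (∀ w : List α, w ≠ [] →
        (gsize w : ℝ) * Real.logb (Fintype.card α) w.length ≤ C * w.length) ∧
      (∀ n : ℕ, Fintype.card α ≤ n → ∃ w : List α, w.length = n ∧
        (n : ℝ) ≤ C * (gsize w : ℝ) * Real.logb (Fintype.card α) n) := by
  refine ⟨18, by norm_num, fun α _ hα => ⟨fun w hw => gsize_mul_logb_le hα hw, fun n hn => ?_⟩⟩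
  obtain ⟨w, hw, hle⟩ := exists_le_gsize_mul_logb hα hn
  have hlog : 0 ≤ Real.logb (Fintype.card α) n :=
    Real.logb_nonneg (by exact_mod_cast hα) (by exact_mod_cast (by omega : 1 ≤ n))
  refine ⟨w, hw, hle.trans ?_⟩
  gcongr
  norm_num

/-- `g(k, n) ∈ Θ(n / log_k n)`: for every word `w` of length `n` over a `k`-letter
alphabet, `g(w) ≤ C · n / log_k n`, and some word of length `n` over a `k`-letter
alphabet has `g(w) ≥ n / (C · log_k n)`. -/
theorem repair_stmt_1 :
    ∃ C : ℕ, 0 < C ∧ ∀ k n : ℕ, 2 ≤ k → k ≤ n →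
      (∀ w : List (Fin k), w.length = n →
        (gsize w : ℝ) * Real.logb k n ≤ (C : ℝ) * n) ∧
      (∃ w : List (Fin k), w.length = n ∧
        (n : ℝ) ≤ (C : ℝ) * (gsize w : ℝ) * Real.logb k n) := by
  obtain ⟨C, hC, h⟩ := repair_stmt_1_general
  refine ⟨C, hC, fun k n hk hkn => ?_⟩
  obtain ⟨hupper, hlower⟩ := Fintype.card_fin k ▸ h (Fin k) (by simpa using hk)
  exact ⟨fun w hw => hw ▸ hupper w (by rintro rfl; simp at hw; omega), hlower n hkn⟩
end

section
/- The approximation ratio of the RePair grammar-based compressor on binary alphabets satisfies α_RePair(2,n) ∈ Ω(log n / log log n): there is an infinite family of binary words s_k with |s_k| = n ∈ Θ(4^k) such that g(s_k) ∈ O(k) while the SLP output by RePair on s_k has size Ω(k²/log k). -/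
/-- Symbols appearing in RePair's grammars: nonterminals (numbered) or terminals. -/
abbrev RSym (α : Type) := ℕ ⊕ α

/-- A grammar in RePair's working representation: the list of right-hand sides, where the
rule at position `i` is the rule of nonterminal `i` and the start nonterminal is `0`. -/
abbrev Grammar (α : Type) := List (List (RSym α))

def countNOAux {σ : Type} [DecidableEq σ] (γ : List σ) : ℕ → List σ → ℕ
  | 0, _ => 0
  | fuel + 1, w =>
    if w = [] then 0
    else if γ <+: w then 1 + countNOAux γ fuel (w.drop γ.length)
    else countNOAux γ fuel w.tail

/-- The maximal number of pairwise non-overlapping occurrences of `γ` (with `|γ| ≥ 1`)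
in `w`, computed by the left-to-right greedy strategy. -/
def countNO {σ : Type} [DecidableEq σ] (γ w : List σ) : ℕ := countNOAux γ w.length w

def replaceNOAux {σ : Type} [DecidableEq σ] (γ : List σ) (X : σ) : ℕ → List σ → List σ
  | 0, w => w
  | _ + 1, [] => []
  | fuel + 1, s :: tl =>
    if γ <+: (s :: tl) then X :: replaceNOAux γ X fuel ((s :: tl).drop γ.length)
    else s :: replaceNOAux γ X fuel tl

/-- Replace the non-overlapping occurrences of `γ` in `w`, left to right, by `X`. -/
def replaceNO {σ : Type} [DecidableEq σ] (γ : List σ) (X : σ) (w : List σ) : List σ :=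
  replaceNOAux γ X w.length w

/-- The number of pairwise non-overlapping occurrences of `γ` in the right-hand sides. -/
def freq {α : Type} [DecidableEq α] (G : Grammar α) (γ : List (RSym α)) : ℕ :=
  (G.map (countNO γ)).sum

/-- `γ` is a maximal string of `G`: it has length at least two, occurs at least twice
without overlap, and no strictly longer word occurs at least as many times. -/
def IsMaxStr {α : Type} [DecidableEq α] (G : Grammar α) (γ : List (RSym α)) : Prop :=
  2 ≤ γ.length ∧ 2 ≤ freq G γ ∧ ∀ δ, γ.length < δ.length → freq G δ < freq G γ

/-- One round of RePair: pick a most frequent maximal string `γ`, replace its occurrences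
left to right by the fresh nonterminal `G.length`, and append the new rule `X → γ`. -/
def RePairStep {α : Type} [DecidableEq α] (G G' : Grammar α) : Prop :=
  ∃ γ, IsMaxStr G γ ∧ (∀ δ, IsMaxStr G δ → freq G δ ≤ freq G γ) ∧
    G' = (G.map (fun r => replaceNO γ (Sum.inl G.length) r)) ++ [γ]

/-- `RePairSteps r G G'`: `G'` is obtained from `G` by `r` rounds of RePair. -/
inductive RePairSteps {α : Type} [DecidableEq α] : ℕ → Grammar α → Grammar α → Prop
  | refl (G) : RePairSteps 0 G G
  | tail {n : ℕ} {G₁ G₂ G₃ : Grammar α} :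
      RePairSteps n G₁ G₂ → RePairStep G₂ G₃ → RePairSteps (n + 1) G₁ G₃

/-- The initial grammar `S → w`. -/
def RePairInit {α : Type} (w : List α) : Grammar α := [w.map Sum.inr]

/-- `G` is an output of RePair on input `w`: reachable from `S → w` by rounds of RePair,
with no maximal string left. -/
def RePairRun {α : Type} [DecidableEq α] (w : List α) (G : Grammar α) : Prop :=
  (∃ n, RePairSteps n (RePairInit w) G) ∧ ∀ γ, ¬ IsMaxStr G γ

/-- The size of a grammar: total length of all right-hand sides. -/
def gramSize {α : Type} (G : Grammar α) : ℕ := (G.map List.length).sum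

/-!
The word `s_k` is `0 ^ 4 ^ k 1` followed by a block `0 ^ (i * R) 1` for each number `i` with
exactly `P = log₂ k` bits, where `R` is the number whose expansion in base `2 ^ P` consists of
`⌊k / P⌋` digits `1`. It has a grammar of size `O(k)`: doubling gives the powers `0 ^ 2 ^ l`,
these give `0 ^ R`, and adding `0 ^ R` repeatedly gives all the blocks.

The block `0 ^ 4 ^ k` is so long that RePair is forced to spend about `k` rounds on pairing equal
neighbours, which rewrites each block `0 ^ m` into the binary expansion of `m`, with one symbol per
bit `1`. After that the block of `i` lists the set bits of `i`, once for each of the `⌊k / P⌋`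
positions of the base `2 ^ P` digits. Cut this word in front of the symbols of the top bits of
these digits: all factors obtained are distinct, as they determine both `i` and the position. So a
repeated factor contains at most one of the `Θ(k * ⌊k / P⌋)` cutting points, every symbol that
RePair introduces later stands for at most two of them, and the start rule stays long.
-/

/-! ### Counting and replacing non-overlapping occurrences -/

lemma scan_induction {σ : Type*} {γ : List σ} (hγ : γ ≠ [])
    {motive : List σ → Prop} (nil : motive []) (hit : ∀ v, motive v → motive (γ ++ v))
    (miss : ∀ s w, ¬ γ <+: s :: w → motive w → motive (s :: w)) (w : List σ) : motive w := by
  induction hn : w.length using Nat.strong_induction_on generalizing w with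
  | _ n ih =>
    subst hn
    by_cases h : γ <+: w
    · obtain ⟨v, rfl⟩ := h
      have hγ₀ : 0 < γ.length := List.length_pos_iff.2 hγ
      exact hit v (ih _ (by rw [List.length_append]; omega) v rfl)
    · cases w with
      | nil => exact nil
      | cons s w => exact miss s w h (ih _ (by simp) w rfl)

lemma pair_append_replicate_append {σ : Type*} (x : σ) (n : ℕ) (v : List σ) :
    [x, x] ++ (List.replicate n x ++ v) = List.replicate (n + 2) x ++ v := by
  simp [List.replicate_succ]

section Greedy

variable {σ : Type} [DecidableEq σ] {γ : List σ}

lemma countNOAux_eq_countNO (hγ : γ ≠ []) {n : ℕ} {w : List σ} (h : w.length ≤ n) :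
    countNOAux γ n w = countNO γ w := by
  induction n using Nat.strong_induction_on generalizing w with
  | _ n ih =>
    rcases n, w with ⟨_ | n, _ | ⟨s, w⟩⟩
    · rfl
    · simp at h
    · rfl
    · have hn : w.length ≤ n := by simpa using h
      have hγ₀ : 0 < γ.length := List.length_pos_iff.2 hγ
      have hdrop : ((s :: w).drop γ.length).length ≤ w.length := by
        rw [List.length_drop, List.length_cons]
        omega
      simp only [countNO, List.length_cons, countNOAux, List.tail_cons]
      rw [ih n n.lt_add_one (hdrop.trans hn), ih n n.lt_add_one hn, ih w.length (by omega) hdrop]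
      rfl

lemma replaceNOAux_eq_replaceNO (hγ : γ ≠ []) (X : σ) {n : ℕ} {w : List σ} (h : w.length ≤ n) :
    replaceNOAux γ X n w = replaceNO γ X w := by
  induction n using Nat.strong_induction_on generalizing w with
  | _ n ih =>
    rcases n, w with ⟨_ | n, _ | ⟨s, w⟩⟩
    · rfl
    · simp at h
    · rfl
    · have hn : w.length ≤ n := by simpa using h
      have hγ₀ : 0 < γ.length := List.length_pos_iff.2 hγ
      have hdrop : ((s :: w).drop γ.length).length ≤ w.length := by
        rw [List.length_drop, List.length_cons]
        omega
      simp only [replaceNO, List.length_cons, replaceNOAux]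
      rw [ih n n.lt_add_one (hdrop.trans hn), ih n n.lt_add_one hn, ih w.length (by omega) hdrop]
      rfl

@[simp]
lemma countNO_nil (γ : List σ) : countNO γ [] = 0 := rfl

@[simp]
lemma replaceNO_nil (γ : List σ) (X : σ) : replaceNO γ X [] = [] := rfl

lemma countNO_append (hγ : γ ≠ []) (v : List σ) : countNO γ (γ ++ v) = countNO γ v + 1 := by
  obtain ⟨s, γ, rfl⟩ := List.exists_cons_of_ne_nil hγ
  rw [countNO, List.cons_append, List.length_cons, countNOAux, if_neg (List.cons_ne_nil _ _),
    ← List.cons_append, if_pos (List.prefix_append _ _), List.drop_left,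
    countNOAux_eq_countNO hγ (by simp), add_comm]

lemma replaceNO_append (hγ : γ ≠ []) (X : σ) (v : List σ) :
    replaceNO γ X (γ ++ v) = X :: replaceNO γ X v := by
  obtain ⟨s, γ, rfl⟩ := List.exists_cons_of_ne_nil hγ
  rw [replaceNO, List.cons_append, List.length_cons, replaceNOAux, ← List.cons_append,
    if_pos (List.prefix_append _ _), List.drop_left,
    replaceNOAux_eq_replaceNO hγ X (by simp)]

lemma countNO_cons_of_not_prefix {s : σ} {w : List σ} (h : ¬ γ <+: s :: w) :
    countNO γ (s :: w) = countNO γ w := by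
  simp [countNO, countNOAux, h]

lemma replaceNO_cons_of_not_prefix (X : σ) {s : σ} {w : List σ} (h : ¬ γ <+: s :: w) :
    replaceNO γ X (s :: w) = s :: replaceNO γ X w := by
  simp [replaceNO, replaceNOAux, h]

lemma countNO_mul_countP_le (hγ : γ ≠ []) (p : σ → Bool) (w : List σ) :
    countNO γ w * γ.countP p ≤ w.countP p := by
  induction w using scan_induction hγ with
  | nil => simp
  | hit v ih => rw [countNO_append hγ, List.countP_append]; linarith
  | miss s w h ih =>
    rw [countNO_cons_of_not_prefix h]
    exact ih.trans (List.sublist_cons_self s w).countP_le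

lemma length_replaceNO_add (hγ : γ ≠ []) (X : σ) (w : List σ) :
    (replaceNO γ X w).length + countNO γ w * γ.length = w.length + countNO γ w := by
  induction w using scan_induction hγ with
  | nil => simp
  | hit v ih =>
    rw [countNO_append hγ, replaceNO_append hγ, List.length_append, List.length_cons]
    linarith
  | miss s w h ih =>
    rw [countNO_cons_of_not_prefix h, replaceNO_cons_of_not_prefix X h, List.length_cons,
      List.length_cons]
    linarith

lemma replaceNO_ne_nil (hγ : γ ≠ []) (X : σ) {w : List σ} (hw : w ≠ []) :
    replaceNO γ X w ≠ [] := by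
  induction w using scan_induction hγ with
  | nil => exact absurd rfl hw
  | hit v _ => rw [replaceNO_append hγ]; exact List.cons_ne_nil _ _
  | miss s w h _ => rw [replaceNO_cons_of_not_prefix X h]; exact List.cons_ne_nil _ _

lemma mem_or_eq_of_mem_replaceNO (hγ : γ ≠ []) {X s : σ} {w : List σ}
    (h : s ∈ replaceNO γ X w) : s ∈ w ∨ s = X := by
  induction w using scan_induction hγ with
  | nil => simp at h
  | hit v ih =>
    rw [replaceNO_append hγ, List.mem_cons] at h
    grind
  | miss t w ht ih =>
    rw [replaceNO_cons_of_not_prefix X ht, List.mem_cons] at h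
    grind

lemma replaceNO_of_notMem (X : σ) {y : σ} (hy : y ∈ γ) {w : List σ} (h : y ∉ w) :
    replaceNO γ X w = w := by
  have hγ : γ ≠ [] := List.ne_nil_of_mem hy
  induction w using scan_induction hγ with
  | nil => rfl
  | hit v _ => exact absurd (List.mem_append_left v hy) h
  | miss s w hs ih => rw [replaceNO_cons_of_not_prefix X hs, ih (List.not_mem_of_not_mem_cons h)]

lemma flatMap_replaceNO {τ : Type*} (hγ : γ ≠ []) {X : σ} {e e' : σ → List τ}
    (hX : e' X = γ.flatMap e) {w : List σ} (h : ∀ s ∈ w, e' s = e s) :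
    (replaceNO γ X w).flatMap e' = w.flatMap e := by
  induction w using scan_induction hγ with
  | nil => rfl
  | hit v ih =>
    rw [replaceNO_append hγ, List.flatMap_cons, List.flatMap_append, hX,
      ih (fun s hs => h s (List.mem_append_right _ hs))]
  | miss s w hs ih =>
    rw [replaceNO_cons_of_not_prefix X hs, List.flatMap_cons, List.flatMap_cons,
      h s List.mem_cons_self, ih (fun s hs => h s (List.mem_cons_of_mem _ hs))]

lemma exists_append_of_countNO_pos (hγ : γ ≠ []) {w : List σ} (h : 0 < countNO γ w) :
    ∃ u v, w = u ++ γ ++ v ∧ countNO γ w ≤ countNO γ v + 1 := by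
  induction w using scan_induction hγ with
  | nil => simp at h
  | hit v _ => exact ⟨[], v, rfl, (countNO_append hγ v).le⟩
  | miss s w hs ih =>
    rw [countNO_cons_of_not_prefix hs] at h ⊢
    obtain ⟨u, v, rfl, hv⟩ := ih h
    exact ⟨s :: u, v, rfl, hv⟩

lemma isInfix_of_countNO_pos (hγ : γ ≠ []) {w : List σ} (h : 0 < countNO γ w) : γ <:+: w := by
  obtain ⟨u, v, hw, -⟩ := exists_append_of_countNO_pos hγ h
  exact ⟨u, v, hw.symm⟩

lemma exists_append_of_two_le_countNO (hγ : γ ≠ []) {w : List σ} (h : 2 ≤ countNO γ w) :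
    ∃ u v v', w = u ++ γ ++ v ++ γ ++ v' := by
  obtain ⟨u, v, rfl, hv⟩ := exists_append_of_countNO_pos hγ (by omega : 0 < countNO γ w)
  obtain ⟨v, v', rfl, -⟩ := exists_append_of_countNO_pos hγ (by omega : 0 < countNO γ v)
  exact ⟨u, v, v', by simp⟩

lemma div_two_le_countNO_pair (x : σ) (n : ℕ) (v : List σ) :
    n / 2 ≤ countNO [x, x] (List.replicate n x ++ v) := by
  induction n using Nat.twoStepInduction with
  | zero => exact Nat.zero_le _
  | one => exact Nat.zero_le _
  | more n ih _ =>
    rw [← pair_append_replicate_append, countNO_append (List.cons_ne_nil _ _)]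
    omega

lemma replaceNO_pair_replicate_append {x : σ} (X : σ) (n : ℕ) {v : List σ} (hv : x ∉ v) :
    replaceNO [x, x] X (List.replicate n x ++ v) =
      List.replicate (n / 2) X ++ List.replicate (n % 2) x ++ v := by
  have hvX : replaceNO [x, x] X v = v := replaceNO_of_notMem X List.mem_cons_self hv
  induction n using Nat.twoStepInduction with
  | zero => simpa using hvX
  | one =>
    have hx : ¬ [x, x] <+: x :: v := fun h =>
      hv ((List.cons_prefix_cons.1 h).2.subset List.mem_cons_self)
    simp [replaceNO_cons_of_not_prefix X hx, hvX]
  | more n ih _ =>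
    rw [← pair_append_replicate_append, replaceNO_append (List.cons_ne_nil _ _), ih,
      show (n + 2) / 2 = n / 2 + 1 by omega, show (n + 2) % 2 = n % 2 by omega,
      List.replicate_succ, List.cons_append, List.cons_append]

lemma replaceNO_pair_append_cons {x y : σ} (X : σ) (hxy : x ≠ y) (u v : List σ) :
    replaceNO [x, x] X (u ++ y :: v) = replaceNO [x, x] X u ++ y :: replaceNO [x, x] X v := by
  have hpair : [x, x] ≠ [] := List.cons_ne_nil _ _
  induction u using scan_induction hpair with
  | nil =>
    have hy : ¬ [x, x] <+: y :: v := fun h => hxy (List.cons_prefix_cons.1 h).1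
    rw [List.nil_append, replaceNO_cons_of_not_prefix X hy, replaceNO_nil, List.nil_append]
  | hit u ih =>
    rw [List.append_assoc, replaceNO_append hpair, replaceNO_append hpair, ih, List.cons_append]
  | miss s u hs ih =>
    have hs' : ¬ [x, x] <+: s :: (u ++ y :: v) := by
      cases u <;> simp_all [List.cons_prefix_cons]
    rw [replaceNO_cons_of_not_prefix X hs, List.cons_append, replaceNO_cons_of_not_prefix X hs',
      ih, List.cons_append]

end Greedy

/-! ### Rounds and runs of RePair -/

lemma length_le_gramSize {α : Type} {G : Grammar α} (h : ∀ r ∈ G, r ≠ []) :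
    G.length ≤ gramSize G := by
  have hpos : ∀ n ∈ G.map List.length, 1 ≤ n := by
    simpa [Nat.one_le_iff_ne_zero] using h
  simpa [gramSize] using List.card_nsmul_le_sum _ 1 hpos

section Grammars

variable {α : Type} [DecidableEq α] {G G' : Grammar α} {γ : List (RSym α)}

lemma freq_cons (r : List (RSym α)) (G : Grammar α) (γ : List (RSym α)) :
    freq (r :: G) γ = countNO γ r + freq G γ := by
  rw [freq, List.map_cons, List.sum_cons, freq]

lemma exists_countNO_pos_of_freq_pos (h : 0 < freq G γ) : ∃ r ∈ G, 0 < countNO γ r := by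
  simpa [freq, Nat.pos_iff_ne_zero, List.sum_eq_zero_iff] using h

lemma freq_mul_countP_le (hγ : γ ≠ []) (p : RSym α → Bool) (G : Grammar α) :
    freq G γ * γ.countP p ≤ G.flatten.countP p := by
  induction G with
  | nil => simp [freq]
  | cons r G ih =>
    rw [freq_cons, List.flatten_cons, List.countP_append, add_mul]
    exact add_le_add (countNO_mul_countP_le hγ p r) ih

lemma freq_le_gramSize (hγ : γ ≠ []) (G : Grammar α) : freq G γ ≤ gramSize G := by
  have h := freq_mul_countP_le hγ (fun _ => true) G
  rw [List.countP_true, List.length_flatten] at h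
  exact (Nat.le_mul_of_pos_right _ (List.length_pos_iff.2 hγ)).trans h

lemma gramSize_map_replaceNO_add (hγ : γ ≠ []) (X : RSym α) (G : Grammar α) :
    gramSize (G.map (replaceNO γ X)) + freq G γ * γ.length = gramSize G + freq G γ := by
  induction G with
  | nil => simp [freq, gramSize]
  | cons r G ih =>
    have := length_replaceNO_add hγ X r
    simp only [freq_cons, gramSize, List.map_cons, List.sum_cons] at ih ⊢
    linarith

lemma IsMaxStr.ne_nil (h : IsMaxStr G γ) : γ ≠ [] :=
  List.ne_nil_of_length_pos (two_pos.trans_le h.1)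

lemma IsMaxStr.exists_rePairStep (h : IsMaxStr G γ) : ∃ G', RePairStep G G' := by
  let freqs := {m | ∃ δ, IsMaxStr G δ ∧ freq G δ = m}
  have hbdd : BddAbove freqs :=
    ⟨gramSize G, by rintro _ ⟨δ, hδ, rfl⟩; exact freq_le_gramSize hδ.ne_nil G⟩
  obtain ⟨δ, hδ, hmax⟩ : sSup freqs ∈ freqs := Nat.sSup_mem ⟨_, γ, h, rfl⟩ hbdd
  exact ⟨_, δ, hδ, fun δ' hδ' => hmax ▸ le_csSup hbdd ⟨δ', hδ', rfl⟩, rfl⟩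

lemma RePairStep.ne_nil (h : RePairStep G G') (hG : ∀ r ∈ G, r ≠ []) : ∀ r ∈ G', r ≠ [] := by
  obtain ⟨γ, hγ, -, rfl⟩ := h
  simp only [List.mem_append, List.mem_map, List.mem_singleton]
  rintro _ (⟨r, hr, rfl⟩ | rfl)
  · exact replaceNO_ne_nil hγ.ne_nil _ (hG r hr)
  · exact hγ.ne_nil

lemma RePairStep.length_eq (h : RePairStep G G') : G'.length = G.length + 1 := by
  obtain ⟨γ, -, -, rfl⟩ := h
  simp

lemma RePairStep.gramSize_le (h : RePairStep G G') : gramSize G' ≤ gramSize G := by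
  obtain ⟨γ, hγ, -, rfl⟩ := h
  have hsum := gramSize_map_replaceNO_add hγ.ne_nil (Sum.inl G.length) G
  have happend : gramSize (G.map (replaceNO γ (Sum.inl G.length)) ++ [γ]) =
      gramSize (G.map (replaceNO γ (Sum.inl G.length))) + γ.length := by
    simp [gramSize]
  have hlength := hγ.1
  have hfreq := hγ.2.1
  rw [happend]
  nlinarith

lemma RePairSteps.exists_terminal {n : ℕ} {G₀ : Grammar α} (h : RePairSteps n G₀ G)
    (hG : ∀ r ∈ G, r ≠ []) : ∃ m G', RePairSteps m G₀ G' ∧ ∀ γ, ¬ IsMaxStr G' γ := by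
  induction hm : gramSize G - G.length using Nat.strong_induction_on generalizing G n with
  | _ m ih =>
    by_cases hex : ∃ γ, IsMaxStr G γ
    · obtain ⟨γ, hγ⟩ := hex
      obtain ⟨G', hG'⟩ := hγ.exists_rePairStep
      have hsize := hG'.gramSize_le
      have hlength := hG'.length_eq
      have hlength_le := length_le_gramSize (hG'.ne_nil hG)
      exact ih _ (by omega) (h.tail hG') (hG'.ne_nil hG) rfl
    · exact ⟨n, G, h, not_exists.1 hex⟩

lemma exists_rePairRun {w : List α} (hw : w ≠ []) : ∃ G, RePairRun w G := by
  obtain ⟨n, G, hsteps, hterm⟩ :=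
    (RePairSteps.refl (RePairInit w)).exists_terminal (by simpa [RePairInit] using hw)
  exact ⟨G, ⟨n, hsteps⟩, hterm⟩

/-- A sufficient condition for `[x, x]` to be the unique most frequent maximal string of `G`: a
string other than `[x, x]` either contains a symbol different from `x` or consists of at least
three `x`, and symbol counts show that neither kind occurs often enough. -/
structure PairDominates (G : Grammar α) (x : RSym α) : Prop where
  two_le_freq : 2 ≤ freq G [x, x]
  countP_ne_lt : G.flatten.countP (· ≠ x) < freq G [x, x]
  countP_eq_lt : G.flatten.countP (· = x) < 3 * freq G [x, x]

lemma PairDominates.freq_lt {x : RSym α} (h : PairDominates G x) {δ : List (RSym α)}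
    (hδ : 2 ≤ δ.length) (hne : δ ≠ [x, x]) : freq G δ < freq G [x, x] := by
  have hnil : δ ≠ [] := List.ne_nil_of_length_pos (by omega)
  by_cases hall : ∀ s ∈ δ, s = x
  · have hlength : 3 ≤ δ.length := by
      by_contra! hlt
      exact hne ((List.eq_replicate_of_mem hall).trans (by rw [show δ.length = 2 by omega]; rfl))
    have hcount : δ.countP (· = x) = δ.length :=
      List.countP_eq_length.2 fun s hs => decide_eq_true (hall s hs)
    have hle := freq_mul_countP_le hnil (· = x) G
    rw [hcount] at hle
    have hlt := h.countP_eq_lt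
    nlinarith
  · push Not at hall
    obtain ⟨s, hs, hsx⟩ := hall
    have hcount : 0 < δ.countP (· ≠ x) := List.countP_pos_iff.2 ⟨s, hs, decide_eq_true hsx⟩
    exact (Nat.le_mul_of_pos_right _ hcount).trans_lt
      ((freq_mul_countP_le hnil _ G).trans_lt h.countP_ne_lt)

lemma PairDominates.isMaxStr {x : RSym α} (h : PairDominates G x) : IsMaxStr G [x, x] :=
  ⟨le_rfl, h.two_le_freq, fun _ hδ => h.freq_lt hδ.le (by rintro rfl; exact hδ.false)⟩

lemma PairDominates.eq_of_rePairStep {x : RSym α} (h : PairDominates G x)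
    (hstep : RePairStep G G') :
    G' = G.map (replaceNO [x, x] (Sum.inl G.length)) ++ [[x, x]] := by
  obtain ⟨δ, hδ, hmost, rfl⟩ := hstep
  obtain rfl : δ = [x, x] := by
    by_contra hne
    exact (h.freq_lt hδ.1 hne).not_ge (hmost _ h.isMaxStr)
  rfl

end Grammars

/-! ### Cutting a word in front of marked letters -/

section Segments

variable {σ : Type*} {p : σ → Bool}

/-- `c` is a segment for the marking `p`: its first letter is marked and no other letter is. -/
def IsSegment (p : σ → Bool) (c : List σ) : Prop :=
  ∃ x u, c = x :: u ∧ p x ∧ ∀ y ∈ u, p y = false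

/-- The factors of `w` obtained by cutting in front of each letter marked by `p`; all of them
except possibly the first are segments. -/
def cutBefore (p : σ → Bool) (w : List σ) : List (List σ) := w.splitBy (fun _ y => !p y)

lemma cutBefore_append_cons {x : σ} (hx : p x) (u v : List σ) :
    cutBefore p (u ++ x :: v) = cutBefore p u ++ cutBefore p (x :: v) :=
  List.splitBy_append (by simp [hx])

lemma cutBefore_cons {x : σ} {u : List σ} (hu : ∀ y ∈ u, p y = false) :
    cutBefore p (x :: u) = [x :: u] := by
  refine List.splitBy_of_isChain (List.cons_ne_nil _ _) (List.Pairwise.isChain ?_)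
  refine List.pairwise_cons.2 ⟨by simpa using hu, List.pairwise_of_forall_mem_list ?_⟩
  simpa using fun _ _ => hu

lemma cutBefore_cons_append_flatten {x : σ} {u : List σ} {cs : List (List σ)}
    (hu : ∀ y ∈ u, p y = false) (hcs : ∀ c ∈ cs, IsSegment p c) :
    cutBefore p (x :: u ++ cs.flatten) = (x :: u) :: cs := by
  induction cs generalizing x u with
  | nil => rw [List.flatten_nil, List.append_nil, cutBefore_cons hu]
  | cons c cs ih =>
    rw [List.forall_mem_cons] at hcs
    obtain ⟨⟨y, v, rfl, hy, hv⟩, hcs⟩ := hcs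
    rw [List.flatten_cons, List.cons_append (as := v), cutBefore_append_cons hy, cutBefore_cons hu,
      ← List.cons_append, ih hv hcs, List.singleton_append]

lemma countP_flatten_of_isSegment {cs : List (List σ)} (hcs : ∀ c ∈ cs, IsSegment p c) :
    cs.flatten.countP p = cs.length := by
  have hone : ∀ c ∈ cs, c.countP p = 1 := fun c hc => by
    obtain ⟨x, u, rfl, hx, hu⟩ := hcs c hc
    rw [List.countP_cons_of_pos hx, List.countP_eq_zero.2 (by simpa using hu)]
  rw [List.countP_flatten, List.map_congr_left hone, List.map_const', List.sum_replicate,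
    smul_eq_mul, mul_one]

lemma exists_append_cons_of_countP_pos {w : List σ} (h : 0 < w.countP p) :
    ∃ u x v, w = u ++ x :: v ∧ p x ∧ ∀ y ∈ u, p y = false := by
  obtain ⟨x, hx⟩ : ∃ x, w.find? p = some x := by
    simpa [← Option.isSome_iff_exists, List.countP_pos_iff] using h
  obtain ⟨hpx, u, v, hw, hu⟩ := List.find?_eq_some_iff_append.1 hx
  exact ⟨u, x, v, hw, hpx, by simpa using hu⟩

lemma exists_append_of_two_le_countP {w : List σ} (h : 2 ≤ w.countP p) :
    ∃ t c y v, w = t ++ c ++ y :: v ∧ IsSegment p c ∧ p y := by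
  obtain ⟨t, x, w, rfl, hx, ht⟩ := exists_append_cons_of_countP_pos (by omega : 0 < w.countP p)
  have hw : 0 < w.countP p := by
    rw [List.countP_append, List.countP_eq_zero.2 (by simpa using ht),
      List.countP_cons_of_pos hx] at h
    omega
  obtain ⟨u, y, v, rfl, hy, hu⟩ := exists_append_cons_of_countP_pos hw
  exact ⟨t, x :: u, y, v, by simp, ⟨x, u, rfl, hx, hu⟩, hy⟩

lemma cutBefore_append_append_cons {c : List σ} (hc : IsSegment p c) {y : σ} (hy : p y)
    (u v : List σ) :
    cutBefore p (u ++ c ++ y :: v) = cutBefore p u ++ [c] ++ cutBefore p (y :: v) := by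
  obtain ⟨x, c, rfl, hx, hc⟩ := hc
  rw [cutBefore_append_cons hy, cutBefore_append_cons hx, cutBefore_cons hc]

-- If `δ` had two marked letters, the segment starting at the first one would be cut out twice.
lemma countP_le_one_of_nodup_cutBefore {u v v' δ : List σ}
    (h : (cutBefore p (u ++ δ ++ v ++ δ ++ v')).Nodup) : δ.countP p ≤ 1 := by
  by_contra! hδ
  obtain ⟨s, c, y, t, rfl, hc, hy⟩ := exists_append_of_two_le_countP hδ
  have hword : u ++ (s ++ c ++ y :: t) ++ v ++ (s ++ c ++ y :: t) ++ v' =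
      (u ++ s) ++ c ++ y :: ((t ++ v ++ s) ++ c ++ y :: (t ++ v')) := by simp
  rw [hword, cutBefore_append_append_cons hc hy, ← List.cons_append, ← List.cons_append,
    cutBefore_append_append_cons hc hy] at h
  simp [List.nodup_append] at h

end Segments

/-! ### RePair on words whose segments are distinct -/

section Expansion

variable {α : Type} {p : RSym α → Bool} {W : List (RSym α)} {e : RSym α → List (RSym α)}
  {r : List (RSym α)} {G : Grammar α}

/-- The invariant of RePair after the word `W` has been reached: expanding symbols by `e`, the
start rule `r` spells `W`, while the rules in `G` and all single symbols spell words with at most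
two letters marked by `p`. -/
structure ExpandsTo (p : RSym α → Bool) (W : List (RSym α)) (e : RSym α → List (RSym α))
    (r : List (RSym α)) (G : Grammar α) : Prop where
  start : r.flatMap e = W
  rule : ∀ r' ∈ G, (r'.flatMap e).countP p ≤ 2
  symbol : ∀ s, (e s).countP p ≤ 2
  fresh : ∀ r' ∈ r :: G, ∀ i, Sum.inl i ∈ r' → i < (r :: G).length

lemma ExpandsTo.countP_le (h : ExpandsTo p W e r G) : W.countP p ≤ 2 * gramSize (r :: G) := by
  have hsum : (r.flatMap e).countP p ≤ r.length * 2 := by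
    rw [List.countP_flatMap]
    refine (List.sum_le_card_nsmul _ 2 ?_).trans_eq (by rw [List.length_map, smul_eq_mul])
    simp only [List.mem_map]
    rintro _ ⟨s, -, rfl⟩
    exact h.symbol s
  rw [← h.start, gramSize, List.map_cons, List.sum_cons]
  omega

variable [DecidableEq α] {γ : List (RSym α)}

lemma ExpandsTo.countP_flatMap_le (h : ExpandsTo p W e r G) (hW : (cutBefore p W).Nodup)
    (hγ : γ ≠ []) (hfreq : 2 ≤ freq (r :: G) γ) : (γ.flatMap e).countP p ≤ 2 := by
  by_cases htwo : 2 ≤ countNO γ r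
  · obtain ⟨u, v, v', rfl⟩ := exists_append_of_two_le_countNO hγ htwo
    rw [← h.start] at hW
    simp only [List.flatMap_append] at hW
    exact (countP_le_one_of_nodup_cutBefore hW).trans one_le_two
  · rw [freq_cons] at hfreq
    obtain ⟨r', hr', hpos⟩ := exists_countNO_pos_of_freq_pos (by omega : 0 < freq G γ)
    obtain ⟨u, v, rfl⟩ := isInfix_of_countNO_pos hγ hpos
    have hle := h.rule _ hr'
    rw [List.flatMap_append, List.flatMap_append, List.countP_append, List.countP_append] at hle
    omega

lemma ExpandsTo.replace (h : ExpandsTo p W e r G) (hγ : γ ≠ [])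
    (hcount : (γ.flatMap e).countP p ≤ 2) (hsub : ∃ r' ∈ r :: G, γ ⊆ r') :
    ExpandsTo p W (Function.update e (Sum.inl (r :: G).length) (γ.flatMap e))
      (replaceNO γ (Sum.inl (r :: G).length) r)
      (G.map (replaceNO γ (Sum.inl (r :: G).length)) ++ [γ]) := by
  set X : RSym α := Sum.inl (r :: G).length
  have hold : ∀ r' ∈ r :: G, ∀ s ∈ r', Function.update e X (γ.flatMap e) s = e s :=
    fun r' hr' s hs => Function.update_of_ne (by
      rintro rfl; exact (h.fresh r' hr' _ hs).false) _ _
  have hflatMap : ∀ r' ∈ r :: G,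
      (replaceNO γ X r').flatMap (Function.update e X (γ.flatMap e)) = r'.flatMap e :=
    fun r' hr' => flatMap_replaceNO hγ (Function.update_self ..) (hold r' hr')
  obtain ⟨r₀, hr₀, hγr₀⟩ := hsub
  refine ⟨(hflatMap r List.mem_cons_self).trans h.start, ?_, fun s => ?_, ?_⟩
  · simp only [List.mem_append, List.mem_map, List.mem_singleton]
    rintro _ (⟨r', hr', rfl⟩ | rfl)
    · rw [hflatMap r' (List.mem_cons_of_mem _ hr')]
      exact h.rule r' hr'
    · rwa [List.flatMap_congr fun s hs => hold r₀ hr₀ s (hγr₀ hs)]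
  · rcases eq_or_ne s X with rfl | hs
    · rwa [Function.update_self]
    · rw [Function.update_of_ne hs]
      exact h.symbol s
  · rw [← List.cons_append, ← List.map_cons (f := replaceNO γ X)]
    simp only [List.mem_append, List.mem_map, List.mem_singleton, List.length_append,
      List.length_map, List.length_singleton]
    rintro _ (⟨r', hr', rfl⟩ | rfl) i hi
    · rcases mem_or_eq_of_mem_replaceNO hγ hi with hi | hi
      · exact (h.fresh r' hr' i hi).trans (Nat.lt_succ_self _)
      · rw [Sum.inl.inj hi]
        exact Nat.lt_succ_self _
    · exact (h.fresh r₀ hr₀ i (hγr₀ hi)).trans (Nat.lt_succ_self _)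

lemma ExpandsTo.rePairStep (h : ExpandsTo p W e r G) (hW : (cutBefore p W).Nodup) {G' : Grammar α}
    (hstep : RePairStep (r :: G) G') : ∃ e' r' G'', G' = r' :: G'' ∧ ExpandsTo p W e' r' G'' := by
  obtain ⟨γ, hγ, -, rfl⟩ := hstep
  obtain ⟨r', hr', hpos⟩ := exists_countNO_pos_of_freq_pos (two_pos.trans_le hγ.2.1)
  exact ⟨_, _, _, rfl, h.replace hγ.ne_nil (h.countP_flatMap_le hW hγ.ne_nil hγ.2.1)
    ⟨r', hr', (isInfix_of_countNO_pos hγ.ne_nil hpos).subset⟩⟩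

end Expansion

/-! ### Pairing equal neighbours -/

section Halving

variable {α : Type}

/-- The symbol standing for `a ^ 2 ^ l` once RePair has paired equal neighbours `l` times. -/
def powSym (a : α) (l : ℕ) : RSym α := if l = 0 then Sum.inr a else Sum.inl l

lemma powSym_succ (a : α) (l : ℕ) : powSym a (l + 1) = Sum.inl (l + 1) := rfl

lemma eq_of_powSym_eq_inl {a : α} {l i : ℕ} (h : powSym a l = Sum.inl i) : l = i := by
  cases l with
  | zero => cases h
  | succ l => exact Sum.inl.inj h

lemma powSym_injective (a : α) : Function.Injective (powSym a) := by
  intro l l' h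
  unfold powSym at h
  split_ifs at h <;> simp_all

lemma powSym_ne_inr {a b : α} (hab : a ≠ b) (l : ℕ) : powSym a l ≠ Sum.inr b := by
  unfold powSym
  split_ifs <;> simp [hab]

/-- The binary digits of `i` below position `d`, most significant first: each digit `1` at a
position `t` is represented by the symbol for `a ^ 2 ^ (c + t)`, digits `0` are omitted. -/
def bitSyms (a : α) (c d i : ℕ) : List (RSym α) :=
  ((List.range d).reverse.filter (i.testBit ·)).map fun t => powSym a (c + t)

lemma mem_bitSyms {a : α} {c d i : ℕ} {s : RSym α} :
    s ∈ bitSyms a c d i ↔ ∃ t < d, i.testBit t ∧ powSym a (c + t) = s := by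
  simp [bitSyms, and_assoc]

lemma bitSyms_succ (a : α) (c d i : ℕ) :
    bitSyms a c (d + 1) i =
      (if i.testBit d then [powSym a (c + d)] else []) ++ bitSyms a c d i := by
  rw [bitSyms, List.range_succ, List.reverse_concat, List.filter_cons]
  split_ifs <;> rfl

lemma length_bitSyms_le (a : α) (c d i : ℕ) : (bitSyms a c d i).length ≤ d := by
  simpa [bitSyms] using (List.length_filter_le (i.testBit ·) (List.range d).reverse)

lemma powSym_notMem_bitSyms (a : α) (d i : ℕ) : powSym a d ∉ bitSyms a 0 d i := by
  rw [mem_bitSyms]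
  rintro ⟨t, ht, -, h⟩
  have := powSym_injective a h
  omega

lemma bitSyms_two_pow_mul_add (a : α) (c d e q : ℕ) {r : ℕ} (hr : r < 2 ^ d) :
    bitSyms a c (d + e) (2 ^ d * q + r) = bitSyms a (c + d) e q ++ bitSyms a c d r := by
  induction e with
  | zero =>
    have hbit : ∀ t ∈ (List.range d).reverse, (2 ^ d * q + r).testBit t = r.testBit t := by
      intro t ht
      rw [Nat.testBit_two_pow_mul_add _ hr, if_pos (by simpa using ht)]
    rw [add_zero, bitSyms, List.filter_congr hbit]
    rfl
  | succ e ih =>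
    have hbit : (2 ^ d * q + r).testBit (d + e) = q.testBit e := by
      rw [Nat.testBit_two_pow_mul_add _ hr, if_neg (by omega), Nat.add_sub_cancel_left]
    rw [← add_assoc, bitSyms_succ, bitSyms_succ, ih, hbit, List.append_assoc, add_assoc]

/-- The block `a ^ m` after `j` rounds of pairing equal neighbours. -/
def halvedBlock (a : α) (j m : ℕ) : List (RSym α) :=
  List.replicate (m / 2 ^ j) (powSym a j) ++ bitSyms a 0 j m

/-- The word `a ^ m₁ b a ^ m₂ b ...` after `j` rounds of pairing equal neighbours. -/
def halvedWord (a b : α) (ms : List ℕ) (j : ℕ) : List (RSym α) :=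
  ms.flatMap fun m => halvedBlock a j m ++ [Sum.inr b]

/-- The rules introduced by `j` rounds of pairing equal neighbours. -/
def pairRules (a : α) (j : ℕ) : Grammar α := (List.range j).map fun l => [powSym a l, powSym a l]

/-- RePair's grammar after `j` rounds of pairing equal neighbours in `a ^ m₁ b a ^ m₂ b ...`. -/
def halvedGrammar (a b : α) (ms : List ℕ) (j : ℕ) : Grammar α :=
  halvedWord a b ms j :: pairRules a j

/-- The word `a ^ m₁ b a ^ m₂ b ...`. -/
def blockWord (a b : α) (ms : List ℕ) : List α := ms.flatMap fun m => List.replicate m a ++ [b]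

lemma rePairInit_blockWord (a b : α) (ms : List ℕ) :
    RePairInit (blockWord a b ms) = halvedGrammar a b ms 0 := by
  simp [RePairInit, halvedGrammar, halvedWord, halvedBlock, blockWord, pairRules, bitSyms, powSym,
    List.map_flatMap]

lemma halvedWord_cons (a b : α) (m : ℕ) (ms : List ℕ) (j : ℕ) :
    halvedWord a b (m :: ms) j = halvedBlock a j m ++ Sum.inr b :: halvedWord a b ms j := by
  simp [halvedWord]

lemma mem_halvedWord {a b : α} {ms : List ℕ} {j : ℕ} {s : RSym α} (h : s ∈ halvedWord a b ms j) :
    (∃ l ≤ j, s = powSym a l) ∨ s = Sum.inr b := by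
  obtain ⟨m, -, hs⟩ := List.mem_flatMap.1 h
  rcases List.mem_append.1 hs with hs | hs
  · rcases List.mem_append.1 hs with hs | hs
    · exact Or.inl ⟨j, le_rfl, List.eq_of_mem_replicate hs⟩
    · obtain ⟨t, ht, -, rfl⟩ := mem_bitSyms.1 hs
      exact Or.inl ⟨0 + t, by omega, rfl⟩
  · exact Or.inr (List.mem_singleton.1 hs)

lemma mem_flatten_pairRules {a : α} {j : ℕ} {s : RSym α} :
    s ∈ (pairRules a j).flatten ↔ ∃ l < j, s = powSym a l := by
  simp [pairRules]

lemma length_flatten_pairRules (a : α) (j : ℕ) : (pairRules a j).flatten.length = 2 * j := by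
  simp [pairRules, List.length_flatten, Function.comp_def, mul_comm]

lemma length_halvedGrammar (a b : α) (ms : List ℕ) (j : ℕ) :
    (halvedGrammar a b ms j).length = j + 1 := by
  simp [halvedGrammar, pairRules]

lemma expandsTo_halvedGrammar (p : RSym α → Bool) (a b : α) (ms : List ℕ) (j : ℕ) :
    ExpandsTo p (halvedWord a b ms j) (fun s => [s]) (halvedWord a b ms j) (pairRules a j) where
  start := List.flatMap_singleton' _
  rule := by
    simp only [pairRules, List.mem_map, List.flatMap_singleton']
    rintro _ ⟨l, -, rfl⟩
    exact List.countP_le_length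
  symbol s := List.countP_le_length.trans one_le_two
  fresh := by
    intro r hr i hi
    rw [← halvedGrammar, length_halvedGrammar, Nat.lt_succ_iff]
    rcases List.mem_cons.1 hr with rfl | hr
    · rcases mem_halvedWord hi with ⟨l, hl, h⟩ | h
      · rwa [← eq_of_powSym_eq_inl h.symm]
      · cases h
    · obtain ⟨l, hl, h⟩ := mem_flatten_pairRules.1 (List.mem_flatten_of_mem hr hi)
      rw [← eq_of_powSym_eq_inl h.symm]
      exact hl.le

variable [DecidableEq α] {a b : α}

lemma replaceNO_halvedBlock (a : α) (j m : ℕ) :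
    replaceNO [powSym a j, powSym a j] (powSym a (j + 1)) (halvedBlock a j m) =
      halvedBlock a (j + 1) m := by
  rw [halvedBlock, replaceNO_pair_replicate_append _ _ (powSym_notMem_bitSyms a j m), halvedBlock,
    bitSyms_succ, Nat.testBit_eq_decide_div_mod_eq, Nat.div_div_eq_div_mul, ← pow_succ,
    List.append_assoc]
  rcases Nat.mod_two_eq_zero_or_one (m / 2 ^ j) with h | h <;> simp [h]

lemma replaceNO_halvedWord (hab : a ≠ b) (ms : List ℕ) (j : ℕ) :
    replaceNO [powSym a j, powSym a j] (powSym a (j + 1)) (halvedWord a b ms j) =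
      halvedWord a b ms (j + 1) := by
  induction ms with
  | nil => rfl
  | cons m ms ih =>
    rw [halvedWord_cons, halvedWord_cons, replaceNO_pair_append_cons _ (powSym_ne_inr hab j),
      replaceNO_halvedBlock, ih]

lemma map_replaceNO_pairRules_append (a : α) (j : ℕ) :
    (pairRules a j).map (replaceNO [powSym a j, powSym a j] (powSym a (j + 1))) ++
      [[powSym a j, powSym a j]] = pairRules a (j + 1) := by
  have hfix : ∀ r ∈ pairRules a j,
      replaceNO [powSym a j, powSym a j] (powSym a (j + 1)) r = r := by
    refine fun r hr => replaceNO_of_notMem _ List.mem_cons_self fun hj => ?_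
    obtain ⟨l, hl, h⟩ := mem_flatten_pairRules.1 (List.mem_flatten_of_mem hr hj)
    exact hl.ne' (powSym_injective a h)
  rw [List.map_congr_left hfix, List.map_id', pairRules, pairRules, List.range_succ,
    List.map_append, List.map_singleton]

lemma map_replaceNO_halvedGrammar_append (hab : a ≠ b) (ms : List ℕ) (j : ℕ) :
    (halvedGrammar a b ms j).map
        (replaceNO [powSym a j, powSym a j] (Sum.inl (halvedGrammar a b ms j).length)) ++
      [[powSym a j, powSym a j]] = halvedGrammar a b ms (j + 1) := by
  rw [length_halvedGrammar, ← powSym_succ a j, halvedGrammar, List.map_cons, List.cons_append,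
    replaceNO_halvedWord hab, map_replaceNO_pairRules_append, halvedGrammar]

lemma countP_eq_flatten_halvedGrammar (hab : a ≠ b) (ms : List ℕ) (j : ℕ) :
    (halvedGrammar a b ms j).flatten.countP (· = powSym a j) = (ms.map (· / 2 ^ j)).sum := by
  have hrules : (pairRules a j).flatten.countP (· = powSym a j) = 0 := by
    refine List.countP_eq_zero.2 fun s hs => ?_
    obtain ⟨l, hl, rfl⟩ := mem_flatten_pairRules.1 hs
    simpa using fun h => hl.ne (powSym_injective a h)
  have hbits (m : ℕ) : (bitSyms a 0 j m).countP (· = powSym a j) = 0 := by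
    refine List.countP_eq_zero.2 fun s hs => ?_
    simpa using ne_of_mem_of_not_mem hs (powSym_notMem_bitSyms a j m)
  rw [halvedGrammar, List.flatten_cons, List.countP_append, hrules, add_zero]
  induction ms with
  | nil => rfl
  | cons m ms ih =>
    rw [halvedWord_cons, List.countP_append, List.countP_cons_of_neg (by
      simpa using (powSym_ne_inr hab j).symm), ih, halvedBlock, List.countP_append, hbits,
      List.countP_replicate, if_pos (decide_eq_true rfl), add_zero, List.map_cons, List.sum_cons]

lemma countP_ne_flatten_halvedGrammar_le (a b : α) (ms : List ℕ) (j : ℕ) :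
    (halvedGrammar a b ms j).flatten.countP (· ≠ powSym a j) ≤ ms.length * (j + 1) + 2 * j := by
  rw [halvedGrammar, List.flatten_cons, List.countP_append]
  refine add_le_add ?_ (List.countP_le_length.trans_eq (length_flatten_pairRules a j))
  induction ms with
  | nil => simp [halvedWord]
  | cons m ms ih =>
    have hbits : (bitSyms a 0 j m).countP (· ≠ powSym a j) ≤ j :=
      List.countP_le_length.trans (length_bitSyms_le a 0 j m)
    have hsep := List.countP_cons (p := (· ≠ powSym a j)) (a := Sum.inr b)
      (l := halvedWord a b ms j)
    rw [halvedWord_cons, List.countP_append, halvedBlock, List.countP_append,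
      List.countP_replicate, if_neg (by simp), List.length_cons, add_mul]
    split_ifs at hsep <;> omega

lemma pairDominates_halvedGrammar (hab : a ≠ b) {m : ℕ} {ms : List ℕ} {j : ℕ}
    (hne : (ms.length + 1) * (j + 1) + 2 * j < m / 2 ^ j / 2)
    (heq : m / 2 ^ j + (ms.map (· / 2 ^ j)).sum < 3 * (m / 2 ^ j / 2)) :
    PairDominates (halvedGrammar a b (m :: ms) j) (powSym a j) := by
  have hfreq : m / 2 ^ j / 2 ≤ freq (halvedGrammar a b (m :: ms) j) [powSym a j, powSym a j] := by
    rw [halvedGrammar, freq_cons, halvedWord_cons, halvedBlock, List.append_assoc]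
    exact (div_two_le_countNO_pair _ _ _).trans (Nat.le_add_right _ _)
  refine ⟨?_, ?_, ?_⟩
  · have : 0 < (ms.length + 1) * (j + 1) := by positivity
    omega
  · exact (countP_ne_flatten_halvedGrammar_le a b _ j).trans_lt (hne.trans_le hfreq)
  · rw [countP_eq_flatten_halvedGrammar hab, List.map_cons, List.sum_cons]
    exact heq.trans_le (Nat.mul_le_mul_left 3 hfreq)

lemma RePairSteps.eq_halvedGrammar_or_expandsTo (hab : a ≠ b) {p : RSym α → Bool} {ms : List ℕ}
    {J n : ℕ} (hdom : ∀ j < J, PairDominates (halvedGrammar a b ms j) (powSym a j))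
    (hnodup : (cutBefore p (halvedWord a b ms J)).Nodup) {G₀ G : Grammar α}
    (hG₀ : G₀ = halvedGrammar a b ms 0) (hG : RePairSteps n G₀ G) :
    (∃ j < J, G = halvedGrammar a b ms j) ∨
      ∃ e r G', G = r :: G' ∧ ExpandsTo p (halvedWord a b ms J) e r G' := by
  have hhalved : ∀ j ≤ J, (∃ i < J, halvedGrammar a b ms j = halvedGrammar a b ms i) ∨
      ∃ e r G', halvedGrammar a b ms j = r :: G' ∧ ExpandsTo p (halvedWord a b ms J) e r G' := by
    intro j hj
    rcases hj.lt_or_eq with hj | rfl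
    · exact Or.inl ⟨j, hj, rfl⟩
    · exact Or.inr ⟨_, _, _, rfl, expandsTo_halvedGrammar p a b ms j⟩
  induction hG with
  | refl =>
    subst hG₀
    exact hhalved 0 (Nat.zero_le J)
  | tail _ hstep ih =>
    rcases ih hG₀ with ⟨j, hj, rfl⟩ | ⟨e, r, G', rfl, hexp⟩
    · rw [(hdom j hj).eq_of_rePairStep hstep, map_replaceNO_halvedGrammar_append hab]
      exact hhalved (j + 1) hj
    · exact Or.inr (hexp.rePairStep hnodup hstep)

lemma RePairRun.countP_halvedWord_le (hab : a ≠ b) {p : RSym α → Bool} {ms : List ℕ} {J : ℕ}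
    (hdom : ∀ j < J, PairDominates (halvedGrammar a b ms j) (powSym a j))
    (hnodup : (cutBefore p (halvedWord a b ms J)).Nodup) {G : Grammar α}
    (hG : RePairRun (blockWord a b ms) G) :
    (halvedWord a b ms J).countP p ≤ 2 * gramSize G := by
  obtain ⟨⟨n, hsteps⟩, hterm⟩ := hG
  rcases hsteps.eq_halvedGrammar_or_expandsTo hab hdom hnodup (rePairInit_blockWord a b ms) with
    ⟨j, hj, rfl⟩ | ⟨e, r, G', rfl, hexp⟩
  · exact absurd (hdom j hj).isMaxStr (hterm _)
  · exact hexp.countP_le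

end Halving

/-! ### Blocks whose lengths have constant digits in base `2 ^ P` -/

section Digits

/-- The number whose expansion in base `2 ^ P` consists of `Q` digits `1`. -/
def repunit (P Q : ℕ) : ℕ := ∑ g ∈ Finset.range Q, 2 ^ (P * g)

lemma repunit_succ (P Q : ℕ) : repunit P (Q + 1) = repunit P Q + 2 ^ (P * Q) :=
  Finset.sum_range_succ _ _

lemma mul_repunit_lt {P i : ℕ} (hi : i < 2 ^ P) (Q : ℕ) : i * repunit P Q < 2 ^ (P * Q) := by
  induction Q with
  | zero => simp [repunit]
  | succ Q ih =>
    calc i * repunit P (Q + 1) = i * 2 ^ (P * Q) + i * repunit P Q := by rw [repunit_succ]; ring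
      _ < (i + 1) * 2 ^ (P * Q) := by linarith
      _ ≤ 2 ^ P * 2 ^ (P * Q) := Nat.mul_le_mul_right _ hi
      _ = 2 ^ (P * (Q + 1)) := by rw [← pow_add]; ring_nf

variable {α : Type}

lemma bitSyms_mul_repunit (a : α) {P i : ℕ} (hi : i < 2 ^ P) (Q : ℕ) :
    bitSyms a 0 (P * Q) (i * repunit P Q) =
      (List.range Q).reverse.flatMap fun g => bitSyms a (P * g) P i := by
  induction Q with
  | zero => rfl
  | succ Q ih =>
    rw [repunit_succ, mul_add i, add_comm (i * _), mul_comm i (2 ^ _), mul_add_one P,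
      bitSyms_two_pow_mul_add a 0 _ _ _ (mul_repunit_lt hi Q), ih, zero_add, List.range_succ,
      List.reverse_concat, List.flatMap_cons]

lemma bitSyms_inj {a : α} {c d i i' : ℕ} (hi : i < 2 ^ d) (hi' : i' < 2 ^ d)
    (h : bitSyms a c d i = bitSyms a c d i') : i = i' := by
  have hmem (i t : ℕ) (ht : t < d) : powSym a (c + t) ∈ bitSyms a c d i ↔ i.testBit t := by
    rw [mem_bitSyms]
    refine ⟨?_, fun hit => ⟨t, ht, hit, rfl⟩⟩
    rintro ⟨t', -, hit', h⟩
    rwa [← Nat.add_left_cancel (powSym_injective a h)]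
  refine Nat.eq_of_testBit_eq fun t => ?_
  rcases lt_or_ge t d with ht | ht
  · rw [Bool.eq_iff_iff, ← hmem i t ht, ← hmem i' t ht, h]
  · have hle : 2 ^ d ≤ 2 ^ t := Nat.pow_le_pow_right two_pos ht
    rw [Nat.testBit_lt_two_pow (hi.trans_le hle), Nat.testBit_lt_two_pow (hi'.trans_le hle)]

/-- The symbols for the base `2 ^ P` digit `i` at position `g` of a multiple of a repunit, with the
separator `b` attached to the last digit. -/
def digitSyms (a b : α) (P i g : ℕ) : List (RSym α) :=
  bitSyms a (P * g) P i ++ if g = 0 then [Sum.inr b] else []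

lemma flatMap_digitSyms (a b : α) (P i Q : ℕ) :
    (List.range (Q + 1)).reverse.flatMap (digitSyms a b P i) =
      ((List.range (Q + 1)).reverse.flatMap fun g => bitSyms a (P * g) P i) ++ [Sum.inr b] := by
  induction Q with
  | zero => simp [digitSyms]
  | succ Q ih =>
    rw [List.range_succ, List.reverse_concat, List.flatMap_cons, ih, List.flatMap_cons, digitSyms,
      if_neg Q.succ_ne_zero, List.append_nil, List.append_assoc]

/-- Whether a symbol stands for the most significant bit of a base `2 ^ (p + 1)` digit. -/
def isLeader (p : ℕ) : RSym α → Bool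
  | Sum.inl l => l % (p + 1) = p
  | Sum.inr _ => false

lemma isLeader_powSym (a : α) {p : ℕ} (hp : 1 ≤ p) (l : ℕ) :
    isLeader p (powSym a l) = decide (l % (p + 1) = p) := by
  cases l with
  | zero => exact (decide_eq_false (by rw [Nat.zero_mod]; omega)).symm
  | succ l => rfl

lemma digitSyms_eq_cons (a b : α) {p i : ℕ} (hi : i ∈ Set.Ico (2 ^ p) (2 ^ (p + 1))) (g : ℕ) :
    digitSyms a b (p + 1) i g = powSym a ((p + 1) * g + p) ::
      (bitSyms a ((p + 1) * g) p i ++ if g = 0 then [Sum.inr b] else []) := by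
  have htop : i.testBit p := Nat.testBit_of_two_pow_le_and_two_pow_add_one_gt hi.1 hi.2
  rw [digitSyms, bitSyms_succ, if_pos htop, List.append_assoc, List.singleton_append]

lemma isSegment_digitSyms (a b : α) {p i : ℕ} (hp : 1 ≤ p)
    (hi : i ∈ Set.Ico (2 ^ p) (2 ^ (p + 1))) (g : ℕ) :
    IsSegment (isLeader p) (digitSyms a b (p + 1) i g) := by
  refine ⟨_, _, digitSyms_eq_cons a b hi g, ?_, fun s hs => ?_⟩
  · rw [isLeader_powSym a hp, Nat.mul_add_mod, Nat.mod_eq_of_lt p.lt_succ_self, decide_eq_true rfl]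
  · rcases List.mem_append.1 hs with hs | hs
    · obtain ⟨t, ht, -, rfl⟩ := mem_bitSyms.1 hs
      rw [isLeader_powSym a hp, Nat.mul_add_mod, Nat.mod_eq_of_lt (by omega)]
      exact decide_eq_false ht.ne
    · split_ifs at hs
      · rw [List.mem_singleton.1 hs, isLeader]
      · cases hs

lemma digitSyms_inj {a b : α} {p i i' g g' : ℕ} (hi : i ∈ Set.Ico (2 ^ p) (2 ^ (p + 1)))
    (hi' : i' ∈ Set.Ico (2 ^ p) (2 ^ (p + 1)))
    (h : digitSyms a b (p + 1) i g = digitSyms a b (p + 1) i' g') : i = i' ∧ g = g' := by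
  have hhead := h
  rw [digitSyms_eq_cons a b hi, digitSyms_eq_cons a b hi', List.cons.injEq] at hhead
  obtain rfl : g = g' :=
    Nat.eq_of_mul_eq_mul_left p.succ_pos (Nat.add_right_cancel (powSym_injective a hhead.1))
  exact ⟨bitSyms_inj hi.2 hi'.2 (List.append_cancel_right h), rfl⟩

/-- The block lengths `i * repunit (p + 1) Q` for the numbers `i` with exactly `p + 1` bits. -/
def digitBlocks (p Q : ℕ) : List ℕ :=
  (List.Ico (2 ^ p) (2 ^ (p + 1))).map (· * repunit (p + 1) Q)

lemma length_digitBlocks (p Q : ℕ) : (digitBlocks p Q).length = 2 ^ p := by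
  rw [digitBlocks, List.length_map, List.Ico.length, pow_succ]
  omega

lemma lt_of_mem_digitBlocks {p Q m : ℕ} (h : m ∈ digitBlocks p Q) : m < 2 ^ ((p + 1) * Q) := by
  obtain ⟨i, hi, rfl⟩ := List.mem_map.1 h
  exact mul_repunit_lt (List.Ico.mem.1 hi).2 Q

/-- The segments into which the blocks of lengths `digitBlocks p Q` are cut after `(p + 1) * Q`
rounds of pairing equal neighbours. -/
def digitSegments (a b : α) (p Q : ℕ) : List (List (RSym α)) :=
  (List.Ico (2 ^ p) (2 ^ (p + 1))).flatMap fun i =>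
    (List.range Q).reverse.map (digitSyms a b (p + 1) i)

lemma isSegment_of_mem_digitSegments {a b : α} {p Q : ℕ} (hp : 1 ≤ p) {c : List (RSym α)}
    (hc : c ∈ digitSegments a b p Q) : IsSegment (isLeader p) c := by
  obtain ⟨i, hi, hc⟩ := List.mem_flatMap.1 hc
  obtain ⟨g, -, rfl⟩ := List.mem_map.1 hc
  exact isSegment_digitSyms a b hp (List.Ico.mem.1 hi) g

lemma nodup_digitSegments (a b : α) (p Q : ℕ) : (digitSegments a b p Q).Nodup := by
  refine List.nodup_flatMap.2 ⟨fun i hi => ?_, (List.Ico.nodup _ _).imp_of_mem ?_⟩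
  · have hi := List.Ico.mem.1 hi
    exact (List.nodup_reverse.2 List.nodup_range).map fun g g' h => (digitSyms_inj hi hi h).2
  · intro i i' hi hi' hne
    rw [Function.onFun, List.disjoint_left]
    simp only [List.mem_map]
    rintro _ ⟨g, -, rfl⟩ ⟨g', -, h⟩
    exact hne (digitSyms_inj (List.Ico.mem.1 hi') (List.Ico.mem.1 hi) h).1.symm

lemma length_digitSegments (a b : α) (p Q : ℕ) : (digitSegments a b p Q).length = 2 ^ p * Q := by
  rw [digitSegments, List.length_flatMap]
  simp only [List.length_map, List.length_reverse, List.length_range, List.map_const',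
    List.Ico.length, List.sum_replicate, smul_eq_mul]
  rw [pow_succ, mul_two, Nat.add_sub_cancel]

lemma halvedWord_digitBlocks (a b : α) (p : ℕ) {Q : ℕ} (hQ : 0 < Q) :
    halvedWord a b (digitBlocks p Q) ((p + 1) * Q) = (digitSegments a b p Q).flatten := by
  obtain ⟨Q, rfl⟩ := Nat.exists_eq_add_one.2 hQ
  rw [halvedWord, digitBlocks, List.flatMap_map, digitSegments, ← List.flatMap_id,
    List.flatMap_assoc]
  refine List.flatMap_congr fun i hi => ?_
  have hi : i < 2 ^ (p + 1) := (List.Ico.mem.1 hi).2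
  rw [halvedBlock, Nat.div_eq_of_lt (mul_repunit_lt hi _), bitSyms_mul_repunit a hi,
    List.flatMap_map, List.replicate_zero, List.nil_append]
  exact (flatMap_digitSyms a b (p + 1) i Q).symm

lemma isLeader_of_mem_halvedBlock_two_pow {a b : α} {p Q n : ℕ} (hp : 1 ≤ p)
    (hn : (p + 1) * Q ≤ n) {s : RSym α}
    (hs : s ∈ halvedBlock a ((p + 1) * Q) (2 ^ n) ++ [Sum.inr b]) : isLeader p s = false := by
  rcases List.mem_append.1 hs with hs | hs
  · rcases List.mem_append.1 hs with hs | hs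
    · rw [List.eq_of_mem_replicate hs, isLeader_powSym a hp, Nat.mul_mod_right]
      exact decide_eq_false (by omega)
    · obtain ⟨t, ht, hbit, -⟩ := mem_bitSyms.1 hs
      rw [Nat.testBit_two_pow, decide_eq_true_eq] at hbit
      omega
  · rw [List.mem_singleton.1 hs, isLeader]

lemma cutBefore_halvedWord_digitBlocks (a b : α) {p Q n : ℕ} (hp : 1 ≤ p) (hQ : 0 < Q)
    (hn : (p + 1) * Q ≤ n) :
    cutBefore (isLeader p) (halvedWord a b (2 ^ n :: digitBlocks p Q) ((p + 1) * Q)) =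
      (halvedBlock a ((p + 1) * Q) (2 ^ n) ++ [Sum.inr b]) :: digitSegments a b p Q := by
  rw [halvedWord_cons, halvedWord_digitBlocks a b p hQ, ← List.singleton_append,
    ← List.append_assoc]
  obtain ⟨x, u, hxu⟩ := List.exists_cons_of_ne_nil
    (List.append_ne_nil_of_right_ne_nil (halvedBlock a ((p + 1) * Q) (2 ^ n))
      (List.cons_ne_nil (Sum.inr b) []))
  rw [hxu]
  refine cutBefore_cons_append_flatten (fun s hs => ?_) fun c => isSegment_of_mem_digitSegments hp
  exact isLeader_of_mem_halvedBlock_two_pow hp hn (hxu ▸ List.mem_cons_of_mem x hs)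

lemma nodup_cutBefore_halvedWord_digitBlocks (a b : α) {p Q n : ℕ} (hp : 1 ≤ p) (hQ : 0 < Q)
    (hn : (p + 1) * Q ≤ n) :
    (cutBefore (isLeader p) (halvedWord a b (2 ^ n :: digitBlocks p Q) ((p + 1) * Q))).Nodup := by
  rw [cutBefore_halvedWord_digitBlocks a b hp hQ hn]
  refine List.nodup_cons.2 ⟨fun hmem => ?_, nodup_digitSegments a b p Q⟩
  obtain ⟨x, u, hxu, hx, -⟩ := isSegment_of_mem_digitSegments hp hmem
  have hfalse := isLeader_of_mem_halvedBlock_two_pow hp hn (hxu ▸ List.mem_cons_self)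
  exact Bool.false_ne_true (hfalse.symm.trans hx)

lemma le_countP_halvedWord_digitBlocks (a b : α) {p Q n : ℕ} (hp : 1 ≤ p) (hQ : 0 < Q) :
    2 ^ p * Q ≤
      (halvedWord a b (2 ^ n :: digitBlocks p Q) ((p + 1) * Q)).countP (isLeader p) := by
  rw [halvedWord_cons, halvedWord_digitBlocks a b p hQ, ← length_digitSegments a b,
    ← countP_flatten_of_isSegment fun c => isSegment_of_mem_digitSegments hp]
  exact ((List.sublist_cons_self _ _).trans (List.sublist_append_right _ _)).countP_le

lemma sum_map_div_two_pow_le {ms : List ℕ} {j d : ℕ} (hms : ∀ m ∈ ms, m < 2 ^ (j + d)) :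
    (ms.map (· / 2 ^ j)).sum ≤ ms.length * 2 ^ d := by
  rw [← List.length_map (as := ms) (· / 2 ^ j), ← smul_eq_mul]
  refine List.sum_le_card_nsmul _ _ fun x hx => ?_
  obtain ⟨m, hm, rfl⟩ := List.mem_map.1 hx
  exact (Nat.div_lt_of_lt_mul (pow_add 2 j d ▸ hms m hm)).le

variable [DecidableEq α] {a b : α}

lemma lt_of_lt_two_pow_sub {x m n : ℕ} (hx : 0 < x) (h : x < 2 ^ (n - m)) : m < n := by
  by_contra! hle
  rw [Nat.sub_eq_zero_of_le hle, pow_zero] at h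
  omega

lemma pairDominates_digitBlocks (hab : a ≠ b) {p Q n j : ℕ} (hp : 1 ≤ p)
    (hn : (2 ^ p + 3) * ((p + 1) * Q) < 2 ^ (n - (p + 1) * Q)) (hj : j < (p + 1) * Q) :
    PairDominates (halvedGrammar a b (2 ^ n :: digitBlocks p Q) j) (powSym a j) := by
  obtain ⟨d, hd⟩ := Nat.exists_eq_add_of_lt hj
  have hQ : 0 < Q := Nat.pos_of_mul_pos_left (Nat.zero_lt_of_lt hj)
  set e := n - (p + 1) * Q
  have hlt : (p + 1) * Q < n := lt_of_lt_two_pow_sub (by positivity) hn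
  have hone : 2 ^ e ≤ 2 ^ (d + e) := Nat.pow_le_pow_right two_pos (Nat.le_add_left e d)
  have hdiv : 2 ^ n / 2 ^ j = 2 * 2 ^ (d + e) := by
    rw [Nat.pow_div (by omega) two_pos, ← pow_succ']
    congr 1
    omega
  refine pairDominates_halvedGrammar hab ?_ ?_
  · rw [hdiv, Nat.mul_div_cancel_left _ two_pos, length_digitBlocks]
    calc (2 ^ p + 1) * (j + 1) + 2 * j ≤ (2 ^ p + 3) * (j + 1) := by linarith
      _ ≤ (2 ^ p + 3) * ((p + 1) * Q) := Nat.mul_le_mul_left _ hj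
      _ < 2 ^ (d + e) := hn.trans_le hone
  · have hsum : ((digitBlocks p Q).map (· / 2 ^ j)).sum ≤ 2 ^ p * 2 ^ (d + 1) :=
      (sum_map_div_two_pow_le fun m hm => by
        rw [← add_assoc, ← hd]; exact lt_of_mem_digitBlocks hm).trans_eq
        (by rw [length_digitBlocks])
    have htwo : 2 ≤ (p + 1) * Q := Nat.mul_le_mul (Nat.succ_le_succ hp) hQ
    have hp_lt : 2 ^ p * 2 < 2 ^ e := by nlinarith [Nat.two_pow_pos p]
    have hsum_lt : 2 ^ p * 2 ^ (d + 1) < 2 ^ (d + e) := by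
      rw [pow_succ', ← mul_assoc, pow_add, mul_comm (2 ^ d)]
      exact Nat.mul_lt_mul_of_pos_right hp_lt (Nat.two_pow_pos d)
    rw [hdiv, Nat.mul_div_cancel_left _ two_pos]
    omega

lemma RePairRun.two_pow_mul_le_gramSize (hab : a ≠ b) {p Q n : ℕ} (hp : 1 ≤ p) (hQ : 0 < Q)
    (hn : (2 ^ p + 3) * ((p + 1) * Q) < 2 ^ (n - (p + 1) * Q)) {G : Grammar α}
    (hG : RePairRun (blockWord a b (2 ^ n :: digitBlocks p Q)) G) :
    2 ^ p * Q ≤ 2 * gramSize G := by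
  have hlt : (p + 1) * Q < n := lt_of_lt_two_pow_sub (by positivity) hn
  exact (le_countP_halvedWord_digitBlocks a b hp hQ).trans <| hG.countP_halvedWord_le hab
    (fun _ => pairDominates_digitBlocks hab hp hn)
    (nodup_cutBefore_halvedWord_digitBlocks a b hp hQ hlt.le)

end Digits

/-! ### Straight-line programs for the blocks -/

section StraightLine

variable {α : Type}

lemma SLP.val_eq (G : SLP α) (i : Fin G.n) :
    G.val i = (G.rhs i).flatMap (Sum.elim G.val fun a => [a]) := by
  rw [SLP.val, List.flatMap_def]
  congr 1
  conv_rhs => rw [← List.attach_map_subtype_val (G.rhs i), List.map_map]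
  refine List.map_congr_left fun s _ => ?_
  rcases s with ⟨j | a, hs⟩ <;> rfl

lemma SLP.val_with_start (G : SLP α) (i j : Fin G.n) :
    SLP.val { G with start := i } j = G.val j := by
  induction hj : (j : ℕ) using Nat.strong_induction_on generalizing j with
  | _ m ih =>
    subst hj
    rw [SLP.val_eq, SLP.val_eq]
    refine List.flatMap_congr fun s hs => ?_
    rcases s with l | a
    · exact ih l (G.dec j l hs) l rfl
    · rfl

/-- The extension of an SLP by one more rule, whose nonterminal becomes the start symbol. -/
@[reducible]
def SLP.extend (G : SLP α) (r : List (Fin G.n ⊕ α)) (hr : r ≠ []) : SLP α where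
  n := G.n + 1
  rhs := Fin.lastCases (r.map (Sum.map Fin.castSucc id))
    fun i => (G.rhs i).map (Sum.map Fin.castSucc id)
  start := Fin.last _
  dec := by
    intro i j h
    induction i using Fin.lastCases with
    | last =>
      rw [Fin.lastCases_last] at h
      obtain ⟨s | a, -, hs⟩ := List.mem_map.1 h
      · rw [← Sum.inl.inj hs]
        exact s.castSucc_lt_last
      · cases hs
    | cast i =>
      rw [Fin.lastCases_castSucc] at h
      obtain ⟨s | a, hmem, hs⟩ := List.mem_map.1 h
      · rw [← Sum.inl.inj hs]
        exact G.dec i s hmem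
      · cases hs
  ne := by
    intro i
    induction i using Fin.lastCases with
    | last => simpa using hr
    | cast i => simpa using G.ne i

lemma SLP.size_extend (G : SLP α) (r : List (Fin G.n ⊕ α)) (hr : r ≠ []) :
    (G.extend r hr).size = G.size + r.length := by
  unfold SLP.size
  exact (Fin.sum_univ_castSucc (n := G.n) _).trans (by simp [SLP.extend])

lemma SLP.val_extend_castSucc (G : SLP α) (r : List (Fin G.n ⊕ α)) (hr : r ≠ [])
    (i : Fin G.n) : (G.extend r hr).val i.castSucc = G.val i := by
  induction hi : (i : ℕ) using Nat.strong_induction_on generalizing i with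
  | _ m ih =>
    subst hi
    have hrhs : (G.extend r hr).rhs i.castSucc = (G.rhs i).map (Sum.map Fin.castSucc id) := by
      simp [SLP.extend]
    rw [SLP.val_eq, SLP.val_eq, hrhs, List.flatMap_map]
    refine List.flatMap_congr fun s hs => ?_
    rcases s with j | a
    · exact ih j (G.dec i j hs) j rfl
    · rfl

lemma SLP.val_extend_last (G : SLP α) (r : List (Fin G.n ⊕ α)) (hr : r ≠ []) :
    (G.extend r hr).val (Fin.last G.n) = r.flatMap (Sum.elim G.val fun a => [a]) := by
  have hrhs : (G.extend r hr).rhs (Fin.last G.n) = r.map (Sum.map Fin.castSucc id) := by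
    simp [SLP.extend]
  rw [SLP.val_eq, hrhs, List.flatMap_map]
  refine List.flatMap_congr fun s _ => ?_
  rcases s with j | a
  · exact G.val_extend_castSucc r hr j
  · rfl

/-- Some SLP of size at most `n` derives each word of `S` from one of its nonterminals. -/
def DerivableWithin (S : Set (List α)) (n : ℕ) : Prop :=
  ∃ G : SLP α, G.size ≤ n ∧ ∀ w ∈ S, ∃ i, G.val i = w

lemma derivableWithin_singleton_singleton (a : α) : DerivableWithin {[a]} 1 := by
  refine ⟨⟨1, fun _ => [Sum.inr a], 0, by simp, by simp⟩, by simp [SLP.size], ?_⟩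
  rintro _ rfl
  exact ⟨0, by simp [SLP.val_eq]⟩

namespace DerivableWithin

variable {S T : Set (List α)} {m n : ℕ} {a : α}

lemma mono (h : DerivableWithin S m) (hT : T ⊆ S) (hn : m ≤ n) : DerivableWithin T n := by
  obtain ⟨G, hsize, hval⟩ := h
  exact ⟨G, hsize.trans hn, fun w hw => hval w (hT hw)⟩

lemma gsize_le (h : DerivableWithin S n) {w : List α} (hw : w ∈ S) : gsize w ≤ n := by
  obtain ⟨G, hsize, hval⟩ := h
  obtain ⟨i, hi⟩ := hval w hw
  have hmem : G.size ∈ {s | ∃ G : SLP α, G.produces w ∧ G.size = s} :=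
    ⟨{ G with start := i }, (G.val_with_start i i).trans hi, rfl⟩
  exact (Nat.sInf_le hmem).trans hsize

lemma insert_flatten (h : DerivableWithin S n) {ps : List (List α)} (hne : ps ≠ [])
    (hps : ∀ w ∈ ps, w ∈ S ∨ ∃ a, w = [a]) :
    DerivableWithin (insert ps.flatten S) (n + ps.length) := by
  obtain ⟨G, hsize, hval⟩ := h
  obtain ⟨r, rfl⟩ : ps ∈ Set.range (List.map (Sum.elim G.val fun a => [a])) := by
    rw [Set.range_list_map]
    intro w hw
    rcases hps w hw with hw | ⟨a, rfl⟩
    · obtain ⟨i, hi⟩ := hval w hw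
      exact ⟨Sum.inl i, hi⟩
    · exact ⟨Sum.inr a, rfl⟩
  have hr : r ≠ [] := fun h => hne (by rw [h, List.map_nil])
  refine ⟨G.extend r hr, ?_, ?_⟩
  · rw [SLP.size_extend, List.length_map]
    exact Nat.add_le_add_right hsize _
  · rintro w (rfl | hw)
    · exact ⟨Fin.last _, by rw [SLP.val_extend_last, List.flatMap_def]⟩
    · obtain ⟨i, hi⟩ := hval w hw
      exact ⟨i.castSucc, by rw [SLP.val_extend_castSucc, hi]⟩

lemma insert_append (h : DerivableWithin S n) {u v : List α} (hu : u ∈ S) (hv : v ∈ S) :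
    DerivableWithin (insert (u ++ v) S) (n + 2) := by
  simpa using h.insert_flatten (ps := [u, v]) (List.cons_ne_nil _ _) (by simp [hu, hv])

lemma union_multiples (h : DerivableWithin S n) (hm : List.replicate m a ∈ S) (N : ℕ) :
    DerivableWithin (S ∪ {w | ∃ i ∈ Set.Icc 1 (N + 1), w = List.replicate (i * m) a})
      (n + 2 * N) := by
  induction N with
  | zero =>
    refine h.mono (Set.union_subset subset_rfl ?_) le_rfl
    rintro _ ⟨i, ⟨hi, hi'⟩, rfl⟩
    obtain rfl : i = 1 := by omega
    rwa [one_mul]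
  | succ N ih =>
    have hlast : List.replicate ((N + 1) * m) a ∈
        S ∪ {w | ∃ i ∈ Set.Icc 1 (N + 1), w = List.replicate (i * m) a} :=
      Or.inr ⟨N + 1, ⟨by omega, le_rfl⟩, rfl⟩
    refine (ih.insert_append hlast (Or.inl hm)).mono ?_ (by omega)
    rintro w (hw | ⟨i, ⟨hi, hi'⟩, rfl⟩)
    · exact Or.inr (Or.inl hw)
    · rcases hi'.lt_or_eq with hi' | rfl
      · exact Or.inr (Or.inr ⟨i, ⟨hi, Nat.lt_succ_iff.1 hi'⟩, rfl⟩)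
      · left
        rw [← List.replicate_add, add_one_mul (N + 1)]

end DerivableWithin

lemma derivableWithin_two_pow (a : α) (n : ℕ) :
    DerivableWithin {w | ∃ l ≤ n, w = List.replicate (2 ^ l) a} (2 * n + 1) := by
  induction n with
  | zero =>
    refine (derivableWithin_singleton_singleton a).mono ?_ le_rfl
    rintro _ ⟨l, hl, rfl⟩
    rw [Nat.le_zero.1 hl]
    rfl
  | succ n ih =>
    have hn : List.replicate (2 ^ n) a ∈ {w | ∃ l ≤ n, w = List.replicate (2 ^ l) a} :=
      ⟨n, le_rfl, rfl⟩
    refine (ih.insert_append hn hn).mono ?_ (by omega)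
    rintro _ ⟨l, hl, rfl⟩
    rcases hl.lt_or_eq with hl | rfl
    · exact Or.inr ⟨l, Nat.lt_succ_iff.1 hl, rfl⟩
    · left
      rw [← List.replicate_add, pow_succ, mul_two]

lemma flatten_replicate_two_pow (a : α) (P Q : ℕ) :
    ((List.range Q).map fun g => List.replicate (2 ^ (P * g)) a).flatten =
      List.replicate (repunit P Q) a := by
  induction Q with
  | zero => rfl
  | succ Q ih =>
    rw [List.range_succ, List.map_append, List.flatten_append, ih, repunit_succ,
      List.replicate_add, List.map_singleton, List.flatten_singleton]

lemma derivableWithin_two_pow_union_repunit_multiples (a : α) {P Q n : ℕ} (hQ : 0 < Q)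
    (hn : P * Q ≤ n) (N : ℕ) :
    DerivableWithin ({w | ∃ l ≤ n, w = List.replicate (2 ^ l) a} ∪
      {w | ∃ i ∈ Set.Icc 1 (N + 1), w = List.replicate (i * repunit P Q) a})
      (2 * n + 1 + Q + 2 * N) := by
  have hrepunit := (derivableWithin_two_pow a n).insert_flatten
    (ps := (List.range Q).map fun g => List.replicate (2 ^ (P * g)) a)
    (List.ne_nil_of_length_pos (by simpa using hQ)) <| by
      simp only [List.mem_map, List.mem_range]
      rintro _ ⟨g, hg, rfl⟩
      exact Or.inl ⟨P * g, (Nat.mul_le_mul_left P hg.le).trans hn, rfl⟩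
  rw [flatten_replicate_two_pow, List.length_map, List.length_range] at hrepunit
  exact (hrepunit.union_multiples (Set.mem_insert _ _) N).mono
    (Set.union_subset_union_left _ (Set.subset_insert _ _)) le_rfl

lemma DerivableWithin.gsize_blockWord_le {S : Set (List α)} {n : ℕ} (h : DerivableWithin S n)
    {a b : α} {ms : List ℕ} (hne : ms ≠ []) (hms : ∀ m ∈ ms, List.replicate m a ∈ S) :
    gsize (blockWord a b ms) ≤ n + 2 * ms.length := by
  have hlength : (ms.flatMap fun m => [List.replicate m a, [b]]).length = 2 * ms.length := by
    simp [List.length_flatMap, mul_comm]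
  have hpos : 0 < (ms.flatMap fun m => [List.replicate m a, [b]]).length := by
    rw [hlength]
    exact Nat.mul_pos two_pos (List.length_pos_iff.2 hne)
  have hword := h.insert_flatten (List.ne_nil_of_length_pos hpos) <| by
      simp only [List.mem_flatMap, List.mem_cons, List.not_mem_nil, or_false]
      rintro w ⟨m, hm, rfl | rfl⟩
      · exact Or.inl (hms m hm)
      · exact Or.inr ⟨b, rfl⟩
  have hflatten : (ms.flatMap fun m => [List.replicate m a, [b]]).flatten = blockWord a b ms := by
    rw [← List.flatMap_id, List.flatMap_assoc]
    simp [blockWord]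
  rw [hlength, hflatten] at hword
  exact hword.gsize_le (Set.mem_insert _ _)

lemma gsize_blockWord_digitBlocks_le (a b : α) {p Q n : ℕ} (hQ : 0 < Q) (hn : (p + 1) * Q ≤ n) :
    gsize (blockWord a b (2 ^ n :: digitBlocks p Q)) ≤ 2 * n + Q + 6 * 2 ^ p + 3 := by
  have hderiv := derivableWithin_two_pow_union_repunit_multiples a hQ hn (2 ^ (p + 1))
  refine (hderiv.gsize_blockWord_le (List.cons_ne_nil _ _) ?_).trans_eq ?_
  · refine List.forall_mem_cons.2 ⟨Or.inl ⟨n, le_rfl, rfl⟩, fun m hm => ?_⟩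
    obtain ⟨i, hi, rfl⟩ := List.mem_map.1 hm
    have hi := List.Ico.mem.1 hi
    have := Nat.two_pow_pos p
    exact Or.inr ⟨i, ⟨by omega, by omega⟩, rfl⟩
  · rw [List.length_cons, length_digitBlocks, pow_succ]
    ring

end StraightLine

/-! ### The family of words -/

section Family

variable {α : Type}

lemma length_blockWord (a b : α) (ms : List ℕ) :
    (blockWord a b ms).length = (ms.map (· + 1)).sum := by
  simp [blockWord, List.length_flatMap]

lemma sum_digitBlocks_add_one_le (p Q : ℕ) :
    ((digitBlocks p Q).map (· + 1)).sum ≤ 2 ^ p * 2 ^ ((p + 1) * Q) := by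
  rw [← length_digitBlocks p Q, ← List.length_map (as := digitBlocks p Q) (· + 1), ← smul_eq_mul]
  refine List.sum_le_card_nsmul _ _ fun x hx => ?_
  obtain ⟨m, hm, rfl⟩ := List.mem_map.1 hx
  exact lt_of_mem_digitBlocks hm

lemma length_blockWord_digitBlocks_mem_Icc (a b : α) {p Q n : ℕ} (hn : p + (p + 1) * Q < n) :
    (blockWord a b (2 ^ n :: digitBlocks p Q)).length ∈ Set.Icc (2 ^ n) (2 * 2 ^ n) := by
  have hsum : ((digitBlocks p Q).map (· + 1)).sum < 2 ^ n := by
    refine (sum_digitBlocks_add_one_le p Q).trans_lt ?_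
    rw [← pow_add]
    exact Nat.pow_lt_pow_right one_lt_two hn
  rw [length_blockWord, List.map_cons, List.sum_cons]
  constructor <;> omega

lemma sq_lt_two_pow {k : ℕ} (hk : 5 ≤ k) : k ^ 2 < 2 ^ k := by
  induction k, hk using Nat.le_induction with
  | base => norm_num
  | succ k hk ih =>
    rw [pow_succ 2 k]
    nlinarith

lemma exists_digit_parameters {k : ℕ} (hk : 4 ≤ k) :
    ∃ p Q, Nat.log 2 k = p + 1 ∧ 1 ≤ p ∧ 0 < Q ∧ 2 * 2 ^ p ≤ k ∧ k < 4 * 2 ^ p ∧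
      (p + 1) * Q ≤ k ∧ k ≤ 2 * ((p + 1) * Q) := by
  have htwo : 2 ≤ Nat.log 2 k := Nat.le_log_of_pow_le one_lt_two hk
  obtain ⟨p, hp⟩ := Nat.exists_eq_add_one.2 (Nat.zero_lt_of_lt htwo)
  have hle : 2 ^ (p + 1) ≤ k := hp ▸ Nat.pow_log_le_self 2 (by omega)
  have hlt : k < 2 ^ (p + 1 + 1) := hp ▸ Nat.lt_pow_succ_log_self one_lt_two k
  have hQ : 0 < k / (p + 1) :=
    Nat.div_pos (Nat.lt_two_pow_self.le.trans hle) p.succ_pos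
  refine ⟨p, k / (p + 1), hp, by omega, hQ, by rwa [← pow_succ'], by omega, Nat.mul_div_le k _, ?_⟩
  calc k ≤ (p + 1) * (k / (p + 1) + 1) := (Nat.lt_mul_div_succ k p.succ_pos).le
    _ ≤ (p + 1) * (2 * (k / (p + 1))) := Nat.mul_le_mul_left _ (by omega)
    _ = 2 * ((p + 1) * (k / (p + 1))) := by ring

end Family

theorem repair_stmt_10_general {α : Type} [DecidableEq α] [Nontrivial α] :
    ∃ C : ℕ, 0 < C ∧ ∀ k : ℕ, C ≤ k → ∃ s : List α,
      4 ^ k ≤ 2 * s.length ∧ s.length ≤ 2 * 4 ^ k ∧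
      gsize s ≤ C * k ∧
      (∃ G : Grammar α, RePairRun s G) ∧
      (∀ G : Grammar α, RePairRun s G →
        k ^ 2 ≤ C * gramSize G * Nat.log 2 k) := by
  obtain ⟨a, b, hab⟩ := exists_pair_ne α
  refine ⟨16, by norm_num, fun k hk => ?_⟩
  obtain ⟨p, Q, hlog, hp, hQ, hple, hplt, hle, hge⟩ := exists_digit_parameters (k := k) (by omega)
  have hfour : 4 ^ k = 2 ^ (2 * k) := by rw [pow_mul]; norm_num
  have hlength := length_blockWord_digitBlocks_mem_Icc a b (p := p) (Q := Q) (n := 2 * k)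
    (by have := p.lt_two_pow_self; omega)
  rw [hfour]
  refine ⟨blockWord a b (2 ^ (2 * k) :: digitBlocks p Q), ?_, hlength.2, ?_, ?_, fun G hG => ?_⟩
  · exact hlength.1.trans (Nat.le_mul_of_pos_left _ two_pos)
  · have hQk : Q ≤ k := (Nat.le_mul_of_pos_left Q p.succ_pos).trans hle
    exact (gsize_blockWord_digitBlocks_le a b hQ (by omega)).trans (by omega)
  · exact exists_rePairRun (by simp [blockWord])
  · have hbound : 2 ^ p * Q ≤ 2 * gramSize G := hG.two_pow_mul_le_gramSize hab hp hQ <|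
      calc (2 ^ p + 3) * ((p + 1) * Q) ≤ k * k := Nat.mul_le_mul (by omega) hle
        _ < 2 ^ k := sq k ▸ sq_lt_two_pow (by omega)
        _ ≤ 2 ^ (2 * k - (p + 1) * Q) := Nat.pow_le_pow_right two_pos (by omega)
    calc k ^ 2 = k * k := sq k
      _ ≤ 4 * 2 ^ p * (2 * ((p + 1) * Q)) := Nat.mul_le_mul hplt.le hge
      _ = 8 * (p + 1) * (2 ^ p * Q) := by ring
      _ ≤ 8 * (p + 1) * (2 * gramSize G) := Nat.mul_le_mul_left _ hbound
      _ = 16 * gramSize G * Nat.log 2 k := by rw [hlog]; ring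

/-- `α_RePair(2, n) ∈ Ω(log n / log log n)`: there are binary words `s_k` of length
`n ∈ Θ(4^k)` with `g(s_k) ∈ O(k)` such that every output of RePair on `s_k` has size
`Ω(k² / log k)`. -/
theorem repair_stmt_10 :
    ∃ C : ℕ, 0 < C ∧ ∀ k : ℕ, C ≤ k → ∃ s : List (Fin 2),
      4 ^ k ≤ 2 * s.length ∧ s.length ≤ 2 * 4 ^ k ∧
      gsize s ≤ C * k ∧
      (∃ G : Grammar (Fin 2), RePairRun s G) ∧
      (∀ G : Grammar (Fin 2), RePairRun s G →
        k ^ 2 ≤ C * gramSize G * Nat.log 2 k) :=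
  repair_stmt_10_general
end
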